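/- arXiv:1011.4884 — 2 statements merged into one kernel-verified Lean document; each statement's English description precedes it below -/
import Mathlib

section
/- Let f : ℂⁿ → ℂ be a mixed polynomial. Then S(f) ⊆ K_∞(f), where K_∞(f) is the set of asymptotic critical values of f in the sense of Kurdyka–Orro–Simon. -/
open Complex Filter Finset

noncomputable section

abbrev MixedCoeff (n : ℕ) := ((Fin n → ℕ) × (Fin n → ℕ)) →₀ ℂ

namespace Mixed

variable {n : ℕ}

/-- Evaluation of a mixed polynomial given by its coefficient function `c`:
`f(z) = Σ c(ν,μ) zᵛ z̄ᵘ`. -/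
def eval (c : MixedCoeff n) (z : Fin n → ℂ) : ℂ :=
  c.sum fun p a => a * (∏ i, z i ^ p.1 i) * ∏ i, (starRingEnd ℂ) (z i) ^ p.2 i

/-- `∂f/∂z_i` evaluated at `(z, z̄)`. -/
def dz (c : MixedCoeff n) (i : Fin n) (z : Fin n → ℂ) : ℂ :=
  c.sum fun p a => a * (p.1 i) * (∏ j, z j ^ (p.1 j - if j = i then 1 else 0)) *
    ∏ j, (starRingEnd ℂ) (z j) ^ p.2 j

/-- `∂f/∂z̄_i` evaluated at `(z, z̄)`. -/
def dzbar (c : MixedCoeff n) (i : Fin n) (z : Fin n → ℂ) : ℂ :=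
  c.sum fun p a => a * (p.2 i) * (∏ j, z j ^ p.1 j) *
    ∏ j, (starRingEnd ℂ) (z j) ^ (p.2 j - if j = i then 1 else 0)

/-- The singular locus of `f` as a real map `ℝ²ⁿ → ℝ²`. -/
def Sing (c : MixedCoeff n) : Set (Fin n → ℂ) :=
  {z | ¬ Function.Surjective ⇑(fderiv ℝ (eval c) z)}

/-- The Milnor set `M(f)`. -/
def Milnor (c : MixedCoeff n) : Set (Fin n → ℂ) :=
  {z | ∃ (l : ℝ) (m : ℂ), m ≠ 0 ∧
    ∀ i, (l : ℂ) * z i = m * (starRingEnd ℂ) (dz c i z) + (starRingEnd ℂ) m * dzbar c i z}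

/-- The set `S(f)` of asymptotic ρ-nonregular values. -/
def Sset (c : MixedCoeff n) : Set ℂ :=
  {v | ∃ zk : ℕ → (Fin n → ℂ), (∀ k, zk k ∈ Milnor c) ∧
    Tendsto (fun k => ‖zk k‖) atTop atTop ∧
    Tendsto (fun k => eval c (zk k)) atTop (nhds v)}

/-- The point of `ℝⁿ` attached to the exponent pair `(ν,μ)`, namely `ν+μ`. -/
def suppPt (p : (Fin n → ℕ) × (Fin n → ℕ)) : Fin n → ℝ := fun i => ((p.1 i + p.2 i : ℕ) : ℝ)

/-- The support of `f`, as a subset of `ℝⁿ`. -/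
def suppPts (c : MixedCoeff n) : Set (Fin n → ℝ) := suppPt '' (c.support : Set _)

/-- The Newton polyhedron `Γ₀(f)`: convex hull of `{0} ∪ supp(f)`. -/
def Gamma0 (c : MixedCoeff n) : Set (Fin n → ℝ) := convexHull ℝ (insert 0 (suppPts c))

/-- `supp(f)‾`: the convex hull of `supp(f) \ {0}`. -/
def suppBar (c : MixedCoeff n) : Set (Fin n → ℝ) := convexHull ℝ (suppPts c \ {0})

/-- `F` is a face of the (compact convex) set `C`: either `C` itself or the set of
minimizers on `C` of a linear functional, and nonempty. -/
def IsFaceOf (C F : Set (Fin n → ℝ)) : Prop :=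
  F.Nonempty ∧ (F = C ∨ ∃ a : Fin n → ℝ,
    F = {x ∈ C | ∀ y ∈ C, ∑ i, a i * x i ≤ ∑ i, a i * y i})

/-- `Δ` is a face of the Newton boundary at infinity `Γ⁺(f)`: a face of `Γ₀(f)` not
containing the origin. -/
def IsGammaPlusFace (c : MixedCoeff n) (Δ : Set (Fin n → ℝ)) : Prop :=
  IsFaceOf (Gamma0 c) Δ ∧ (0 : Fin n → ℝ) ∉ Δ

/-- `Γ⁺(f)` as a subset of `ℝⁿ`: the union of the faces of `Γ₀(f)` not containing `0`. -/
def GammaPlusSet (c : MixedCoeff n) : Set (Fin n → ℝ) :=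
  {x | ∃ Δ, IsGammaPlusFace c Δ ∧ x ∈ Δ}

/-- The truncation `f_Δ` of `f` to a subset `Δ ⊆ ℝⁿ`. -/
def trunc (c : MixedCoeff n) (Δ : Set (Fin n → ℝ)) : MixedCoeff n :=
  @Finsupp.filter _ _ _ (fun p => suppPt p ∈ Δ) (Classical.decPred _) c

/-- Newton non-degeneracy: for every face `Δ` of `Γ⁺(f)`,
`Sing f_Δ ∩ f_Δ⁻¹(0) ∩ (ℂ*)ⁿ = ∅`. -/
def NewtonNonDeg (c : MixedCoeff n) : Prop :=
  ∀ Δ, IsGammaPlusFace c Δ → ∀ z : Fin n → ℂ, (∀ i, z i ≠ 0) →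
    eval (trunc c Δ) z = 0 → z ∉ Sing (trunc c Δ)

/-- Newton strong non-degeneracy: for every face `Δ` of `Γ⁺(f)`,
`Sing f_Δ ∩ (ℂ*)ⁿ = ∅`. -/
def NewtonStronglyNonDeg (c : MixedCoeff n) : Prop :=
  ∀ Δ, IsGammaPlusFace c Δ → ∀ z : Fin n → ℂ, (∀ i, z i ≠ 0) →
    z ∉ Sing (trunc c Δ)

/-- `Δ` is a bad face of `supp(f)‾`. -/
def IsBadFace (c : MixedCoeff n) (Δ : Set (Fin n → ℝ)) : Prop :=
  IsFaceOf (suppBar c) Δ ∧ (0 : Fin n → ℝ) ∈ affineSpan ℝ Δ ∧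
    ∃ a : Fin n → ℝ, (∃ i, a i < 0) ∧ (∃ j, 0 < a j) ∧
      {x ∈ suppBar c | ∑ i, a i * x i = 0} = Δ

/-- `f` depends effectively on all its variables. -/
def EffectiveAll (c : MixedCoeff n) : Prop :=
  ∀ i, ∃ p ∈ c.support, 0 < p.1 i + p.2 i

/-- The Euclidean norm on `ℂⁿ`. -/
def norm2 (v : Fin n → ℂ) : ℝ := Real.sqrt (∑ i, Complex.normSq (v i))

end Mixed

namespace MixedAux
open MvPolynomial TensorProduct

theorem exists_ext_derivation {k S F : Type*} [Field k] [CommRing S] [IsDomain S] [Field F]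
    [CharZero F] [Algebra k S] [Algebra k F] [Algebra S F] [IsScalarTower k S F]
    [FaithfulSMul S F] [Algebra.IsAlgebraic S F] (d : Derivation k S F) :
    ∃ D : Derivation k F F, ∀ s, D (algebraMap S F s) = d s := by
  let := FractionRing.liftAlgebra S F
  have : IsScalarTower S (FractionRing S) F := FractionRing.isScalarTower_liftAlgebra S F
  have : Algebra.IsAlgebraic (FractionRing S) F :=
    (IsFractionRing.comap_isAlgebraic_iff (A := S) (K := FractionRing S) (C := F)).1 inferInstance
  have : CharZero (FractionRing S) :=
    (RingHom.charZero_iff (algebraMap (FractionRing S) F).injective).2 inferInstance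
  have : Algebra.FormallyEtale (FractionRing S) F := Algebra.FormallyEtale.of_isSeparable _ _
  have : Algebra.FormallyEtale S (FractionRing S) :=
    Algebra.FormallyEtale.of_isLocalization (nonZeroDivisors S)
  have : Algebra.FormallyEtale S F := Algebra.FormallyEtale.comp S (FractionRing S) F
  let e := KaehlerDifferential.tensorKaehlerEquivOfFormallyEtale k S F
  let φ : F ⊗[S] (Ω[S⁄k]) →ₗ[F] F := d.liftKaehlerDifferential.liftBaseChange F
  refine ⟨(φ ∘ₗ e.symm.toLinearMap).compDer (KaehlerDifferential.D k F), fun s => ?_⟩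
  have := KaehlerDifferential.tensorKaehlerEquivOfFormallyEtale_symm_D_algebraMap k S F s
  simp only [LinearMap.compDer, e, φ] 
  simp [this]

theorem exists_derivation {k F ι : Type*} [Field k] [Field F] [CharZero F] [Algebra k F]
    {x : ι → F} (hx : AlgebraicIndependent k x) (y : ι → F) :
    ∃ D : Derivation k F F, ∀ i, D (x i) = y i := by
  classical
  obtain ⟨t, hst, ht⟩ := exists_isTranscendenceBasis_superset
    ((algebraicIndependent_subtype_range hx.injective).2 hx)
  have hti := ht.1
  let : Algebra (MvPolynomial t k) F := (aeval (R := k) (Subtype.val : t → F)).toAlgebra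
  have : IsScalarTower k (MvPolynomial t k) F := IsScalarTower.of_algebraMap_eq (fun r => by
    change _ = aeval _ (C r); simp)
  have : FaithfulSMul (MvPolynomial t k) F := (faithfulSMul_iff_algebraMap_injective _ _).2 hti
  have := ht.isAlgebraic
  have : Algebra.IsAlgebraic (MvPolynomial t k) F :=
    Algebra.IsAlgebraic.of_ringHom_of_comp_eq hti.aevalEquiv (RingHom.id F)
      hti.aevalEquiv.surjective Function.injective_id (by
        apply RingHom.ext; intro a
        exact hti.algebraMap_aevalEquiv a)
  let w : t → F := fun s => if h : ∃ i, x i = s.1 then y h.choose else 0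
  obtain ⟨D, hD⟩ := exists_ext_derivation (S := MvPolynomial t k) (mkDerivation k w)
  refine ⟨D, fun i => ?_⟩
  have h1 := hD (X ⟨x i, hst ⟨i, rfl⟩⟩)
  rw [mkDerivation_X] at h1
  have h2 : algebraMap (MvPolynomial t k) F (X ⟨x i, hst ⟨i, rfl⟩⟩) = x i := by
    change aeval _ (X _) = _; simp
  rw [h2] at h1
  rw [h1]
  have h : ∃ j, x j = x i := ⟨i, rfl⟩
  simp only [w, h, dif_pos]
  rw [hx.injective h.choose_spec]

theorem derivation_aeval {k F σ : Type*} [Field k] [Field F] [Algebra k F] [Fintype σ]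
    (D : Derivation k F F) (x : σ → F) (P : MvPolynomial σ k) :
    D (aeval x P) = ∑ i, aeval x (pderiv i P) * D (x i) := by
  classical
  induction P using MvPolynomial.induction_on with
  | C a => simp
  | add p q hp hq => simp [hp, hq, Finset.sum_add_distrib, add_mul]
  | mul_X p i hp =>
    simp only [map_mul, aeval_X, Derivation.leibniz, hp, pderiv_X, smul_eq_mul, map_add]
    simp only [add_mul, Finset.sum_add_distrib, mul_assoc, Pi.single_apply]
    rw [Finset.mul_sum, add_comm]
    simp [apply_ite, Finset.sum_ite_eq]
    grind

theorem dimension_drop {k F σ : Type*} [Field k] [Field F] [Algebra k F]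
    {P E : MvPolynomial σ k} (hP : Irreducible P) (hPE : ¬ P ∣ E) (p : σ → F)
    (h1 : aeval p P = 0) (h2 : aeval p E = 0) (i0 : σ)
    (hi : AlgebraicIndependent k (fun j : {j // j ≠ i0} => p j)) : False := by
  classical
  let I := Ideal.span {P}
  have hPr : Prime P := hP.prime
  have hIp : I.IsPrime := (Ideal.span_singleton_prime hPr.ne_zero).2 hPr
  let B := MvPolynomial σ k ⧸ I
  let φ : B →ₐ[k] F := Ideal.Quotient.liftₐ I (aeval p) (by
    intro a ha
    obtain ⟨b, rfl⟩ := Ideal.mem_span_singleton.1 ha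
    simp [h1])
  have hφ : ∀ q, φ (Ideal.Quotient.mk I q) = aeval p q := fun q => rfl
  let x : σ → B := fun j => Ideal.Quotient.mk I (X j)
  have hx : ∀ q : MvPolynomial σ k, aeval x q = Ideal.Quotient.mk I q := by
    intro q
    have : aeval x = Ideal.Quotient.mkₐ k I := by
      apply MvPolynomial.algHom_ext; intro i; simp only [aeval_X]; rfl
    rw [this]; rfl
  have hxi : AlgebraicIndependent k (fun j : {j // j ≠ i0} => x j) := by
    apply AlgebraicIndependent.of_comp φ
    convert! hi using 1
    ext j
    simp [x, hφ]
  have hnx : ¬ AlgebraicIndependent k x := by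
    intro h
    have : aeval x P = 0 := by
      rw [hx, Ideal.Quotient.eq_zero_iff_mem]; exact Ideal.mem_span_singleton_self P
    exact hP.ne_zero (h (by rw [this, map_zero]))
  have halg : IsAlgebraic (Algebra.adjoin k (x '' {i0}ᶜ)) (x i0) := by
    by_contra h
    exact hnx ((AlgebraicIndependent.iff_transcendental_adjoin_image i0).2 ⟨hxi, h⟩)
  have hall : ∀ q : MvPolynomial σ k,
      IsAlgebraic (Algebra.adjoin k (x '' {i0}ᶜ)) (Ideal.Quotient.mk I q) := by
    intro q
    induction q using MvPolynomial.induction_on with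
    | C a =>
      have : Ideal.Quotient.mk I (C a) =
        algebraMap (Algebra.adjoin k (x '' {i0}ᶜ)) B (algebraMap k _ a) := rfl
      rw [this]; exact isAlgebraic_algebraMap _
    | add p q hp hq => rw [map_add]; exact hp.add hq
    | mul_X p i hp =>
      rw [map_mul]; refine hp.mul ?_
      by_cases h : i = i0
      · subst h; exact halg
      · have hm : x i ∈ Algebra.adjoin k (x '' {i0}ᶜ) :=
          Algebra.subset_adjoin ⟨i, h, rfl⟩
        exact isAlgebraic_algebraMap (⟨x i, hm⟩ : Algebra.adjoin k (x '' {i0}ᶜ))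
  have hE0 : Ideal.Quotient.mk I E ≠ 0 := by
    rw [Ne, Ideal.Quotient.eq_zero_iff_mem, Ideal.mem_span_singleton]; exact hPE
  obtain ⟨⟨r, hr⟩, hr0, s, hs⟩ := (hall E).exists_nonzero_dvd (mem_nonZeroDivisors_of_ne_zero hE0)
  have hφr : φ r = 0 := by
    change r = _ at hs
    rw [hs, map_mul, hφ, h2, zero_mul]
  have him : x '' {i0}ᶜ = Set.range (fun j : {j // j ≠ i0} => x j) := by
    ext y; simp
  rw [him, Algebra.adjoin_range_eq_range_aeval] at hr
  obtain ⟨q, hq⟩ := hr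
  apply hr0
  apply Subtype.ext
  have hq0 : aeval (fun j : {j // j ≠ i0} => p j) q = 0 := by
    rw [← hφr, ← hq]
    change _ = φ (aeval _ q)
    rw [MvPolynomial.comp_aeval_apply]
    simp [x, hφ]
  have : q = 0 := hi (by rw [hq0, map_zero])
  change r = 0
  rw [← hq, this]; simp

theorem totalDegree_pderiv_lt {k σ : Type*} [Field k] {P : MvPolynomial σ k} (i : σ)
    (h : pderiv i P ≠ 0) : (pderiv i P).totalDegree < P.totalDegree := by
  have key : ∀ m ∈ (pderiv i P).support, (m.sum fun _ e => e) + 1 ≤ P.totalDegree := by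
    intro m hm
    rw [mem_support_iff, coeff_pderiv] at hm
    have h1 : m + Finsupp.single i 1 ∈ P.support := by
      rw [mem_support_iff]; intro h0; rw [h0] at hm; simp at hm
    have := le_totalDegree h1
    rwa [Finsupp.sum_add_index' (by simp) (by simp), Finsupp.sum_single_index rfl] at this
  obtain ⟨m, hm⟩ := support_nonempty.2 h
  have h0 := key m hm
  rw [totalDegree, Finset.sup_lt_iff (by rw [bot_eq_zero]; omega)]
  intro m hm
  have := key m hm
  omega

theorem exists_pderiv_ne_zero {k σ : Type*} [Field k] [CharZero k] {P : MvPolynomial σ k}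
    (h : P.totalDegree ≠ 0) : ∃ i, pderiv i P ≠ 0 := by
  classical
  by_contra! hc
  apply h
  rw [totalDegree_eq_zero_iff]
  intro m hm i
  by_contra hi
  have h1 := congrArg (coeff (m - Finsupp.single i 1)) (hc i)
  rw [coeff_pderiv, coeff_zero] at h1
  have h2 : m - Finsupp.single i 1 + Finsupp.single i 1 = m := by
    apply tsub_add_cancel_of_le
    rw [Finsupp.single_le_iff]; omega
  rw [h2] at h1
  rcases mul_eq_zero.1 h1 with h3 | h3
  · exact (mem_support_iff.1 hm) h3
  · exact Nat.cast_add_one_ne_zero _ h3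

theorem exists_irreducible {k F σ : Type*} [Field k] [CharZero k] [Field F] [Algebra k F]
    (p : σ → F) (hp : ¬ AlgebraicIndependent k p) :
    ∃ P : MvPolynomial σ k, Irreducible P ∧ aeval p P = 0 ∧ ∃ i, aeval p (pderiv i P) ≠ 0 := by
  classical
  have hex : ∃ d, ∃ P : MvPolynomial σ k, P ≠ 0 ∧ aeval p P = 0 ∧ P.totalDegree = d := by
    rw [algebraicIndependent_iff] at hp
    push Not at hp
    obtain ⟨P, h1, h2⟩ := hp
    exact ⟨_, P, h2, h1, rfl⟩
  obtain ⟨P, hP0, hPp, hd⟩ := Nat.find_spec hex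
  have hmin : ∀ Q : MvPolynomial σ k, Q ≠ 0 → aeval p Q = 0 → P.totalDegree ≤ Q.totalDegree := by
    intro Q h1 h2
    rw [hd]; exact Nat.find_min' hex ⟨Q, h1, h2, rfl⟩
  have hconst : ∀ Q : MvPolynomial σ k, Q.totalDegree = 0 → Q ≠ 0 → IsUnit Q := by
    intro Q h1 h2
    rw [totalDegree_eq_zero_iff_eq_C] at h1
    rw [h1] at h2 ⊢
    have : coeff 0 Q ≠ 0 := fun h => h2 (by rw [h, C_0])
    exact (IsUnit.mk0 _ this).map C
  have hPu : ¬ IsUnit P := by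
    intro h
    exact (h.map (aeval p)).ne_zero hPp
  have hP1 : P.totalDegree ≠ 0 := fun h => hPu (hconst P h hP0)
  refine ⟨P, ⟨hPu, ?_⟩, hPp, ?_⟩
  · intro a b hab
    have ha : a ≠ 0 := by rintro rfl; simp at hab; exact hP0 hab
    have hb : b ≠ 0 := by rintro rfl; simp at hab; exact hP0 hab
    have hdeg := totalDegree_mul_of_isDomain ha hb
    rw [← hab] at hdeg
    have h0 : aeval p a * aeval p b = 0 := by rw [← map_mul, ← hab, hPp]
    rcases mul_eq_zero.1 h0 with h | h
    · right
      exact hconst b (by have := hmin a ha h; omega) hb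
    · left
      exact hconst a (by have := hmin b hb h; omega) ha
  · obtain ⟨i, hi⟩ := exists_pderiv_ne_zero hP1
    refine ⟨i, fun h => ?_⟩
    have := hmin _ hi h
    have := totalDegree_pderiv_lt i hi
    omega

theorem real_flow (f fs fx : ℝ × ℝ → ℝ) (hf : Continuous f) (hfs : Continuous fs)
    (hfx : Continuous fx)
    (hder : ∀ s x α : ℝ, HasDerivAt (fun t => f (s + t, x + α * t)) (fs (s, x) + α * fx (s, x)) 0)
    (c B s1 x1 : ℝ) (hc : 0 < c)
    (hno : ∀ s x, s1 ≤ s → f (s, x) = 0 →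
      fx (s, x) ≠ 0 ∧ fs (s, x) ^ 2 ≠ c ^ 2 * fx (s, x) ^ 2 ∧ x ≠ B)
    (hxB : x1 ≤ B) (h0 : f (s1, x1) = 0)
    (h1 : c * fx (s1, x1) ^ 2 ≤ - fs (s1, x1) * fx (s1, x1)) : False := by
  let Z : Set (ℝ × ℝ) := (Set.Icc s1 (s1 + (B - x1) / c) ×ˢ Set.Icc x1 B) ∩
    ({p | f p = 0} ∩ {p | c * fx p ^ 2 ≤ - fs p * fx p} ∩ {p | x1 + c * (p.1 - s1) ≤ p.2})
  have hZc : IsCompact Z := by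
    apply (isCompact_Icc.prod isCompact_Icc).inter_right
    refine ((isClosed_eq hf continuous_const).inter ?_).inter ?_
    · exact isClosed_le (by fun_prop) (by fun_prop)
    · exact isClosed_le (by fun_prop) (by fun_prop)
  have hZn : Z.Nonempty := by
    refine ⟨(s1, x1), ⟨⟨⟨le_refl _, ?_⟩, ⟨le_refl _, hxB⟩⟩, ⟨h0, h1⟩, ?_⟩⟩
    · have : 0 ≤ (B - x1) / c := div_nonneg (by linarith) hc.le
      simp; exact this
    · simp
  obtain ⟨⟨s, x⟩, hmem, hmax⟩ := hZc.exists_isMaxOn hZn (continuous_fst.continuousOn)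
  obtain ⟨⟨⟨hs1, hs2⟩, ⟨hx1, hx2⟩⟩, ⟨hf0, hf1⟩, hcone⟩ := hmem
  simp only [Set.mem_setOf_eq] at hs1 hs2 hx1 hx2 hf0 hf1 hcone
  obtain ⟨n1, n2, n3⟩ := hno s x hs1 hf0
  set v := fx (s, x) with hv
  set u := fs (s, x) with hu
  have hv2 : 0 < v ^ 2 := by positivity
  have hstr : c * v ^ 2 < - u * v := by
    refine lt_of_le_of_ne hf1 fun h => n2 ?_
    have : v * (c * v + u) = 0 := by linarith
    rcases mul_eq_zero.1 this with h | h
    · exact absurd h n1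
    · have : u = - (c * v) := by linarith
      rw [this]; ring
  have hxB' : x < B := lt_of_le_of_ne hx2 n3
  -- slope
  let α := - u / v + 1
  have hα : c < α := by
    have : c < - u / v := by
      have : -u / v = (-u * v) / v ^ 2 := by field_simp
      rw [this, lt_div_iff₀ hv2]; exact hstr
    simp only [α]; linarith
  have ev1 : ∀ᶠ t in nhdsWithin (0:ℝ) (Set.Ioi 0), v * f (s + t, x + c * t) < 0 := by
    have hd : HasDerivAt (fun t => v * f (s + t, x + c * t)) (v * (u + c * v)) 0 :=
      (hder s x c).const_mul v
    have hneg : v * (u + c * v) < 0 := by nlinarith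
    have := (hd.tendsto_slope_zero_right).eventually (gt_mem_nhds hneg)
    filter_upwards [this, self_mem_nhdsWithin] with t ht ht0
    have ht0 : 0 < t := ht0
    simp only [zero_add, add_zero, mul_zero, hf0, sub_zero, smul_eq_mul] at ht
    by_contra hcon
    push Not at hcon
    exact absurd ht (not_lt.2 (mul_nonneg (inv_nonneg.2 ht0.le) hcon))
  have ev2 : ∀ᶠ t in nhdsWithin (0:ℝ) (Set.Ioi 0), 0 < v * f (s + t, x + α * t) := by
    have hd : HasDerivAt (fun t => v * f (s + t, x + α * t)) (v * (u + α * v)) 0 :=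
      (hder s x α).const_mul v
    have hpos : 0 < v * (u + α * v) := by
      have : v * (u + α * v) = v ^ 2 := by simp only [α]; field_simp; ring
      rw [this]; exact hv2
    have := (hd.tendsto_slope_zero_right).eventually (lt_mem_nhds hpos)
    filter_upwards [this, self_mem_nhdsWithin] with t ht ht0
    have ht0 : 0 < t := ht0
    simp only [zero_add, add_zero, mul_zero, hf0, sub_zero, smul_eq_mul] at ht
    exact (mul_pos_iff_of_pos_left (inv_pos.2 ht0)).1 ht
  have ev3 : ∀ᶠ p in nhds (s, x), c * fx p ^ 2 < - fs p * fx p ∧ p.2 < B := by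
    refine (ContinuousAt.eventually_lt (f := fun p : ℝ × ℝ => c * fx p ^ 2)
      (g := fun p => - fs p * fx p) (by fun_prop) (by fun_prop) hstr).and ?_
    exact ContinuousAt.eventually_lt (f := fun p : ℝ × ℝ => p.2)
      (g := fun p => B) (by fun_prop) (by fun_prop) hxB'
  obtain ⟨δ, hδ, hball⟩ := Metric.eventually_nhds_iff.1 ev3
  have hαpos : 0 < α := hc.trans hα
  have ev4 : ∀ᶠ t in nhdsWithin (0:ℝ) (Set.Ioi 0), t < δ ∧ α * t < δ := by
    apply eventually_nhdsWithin_of_eventually_nhds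
    refine (gt_mem_nhds hδ).and ?_
    exact ContinuousAt.eventually_lt (f := fun t => α * t) (g := fun _ => δ) (by fun_prop)
      (by fun_prop) (by simpa using hδ)
  obtain ⟨t, h1, h2, ⟨h3, h4⟩, ht0⟩ := (ev1.and (ev2.and (ev4.and self_mem_nhdsWithin))).exists
  have ht0 : 0 < t := ht0
  have hle : x + c * t ≤ x + α * t := by nlinarith
  have hcont : ContinuousOn (fun y => v * f (s + t, y)) (Set.Icc (x + c * t) (x + α * t)) := by
    fun_prop
  obtain ⟨y, ⟨hy1, hy2⟩, hy⟩ := intermediate_value_Icc hle hcont ⟨h1.le, h2.le⟩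
  have hfy : f (s + t, y) = 0 := by
    rcases mul_eq_zero.1 hy with h | h
    · exact absurd h n1
    · exact h
  have hct : 0 < c * t := mul_pos hc ht0
  have hd : dist (s + t, y) (s, x) < δ := by
    rw [Prod.dist_eq, max_lt_iff]
    simp only [Real.dist_eq]
    constructor
    · rw [add_sub_cancel_left, abs_of_pos ht0]; exact h3
    · rw [abs_of_pos (by linarith)]; linarith
  obtain ⟨k1, k2⟩ := hball hd
  have hcone' : x1 + c * (s + t - s1) ≤ y := by nlinarith
  have hZ : (s + t, y) ∈ Z := by
    refine ⟨⟨⟨by simp; linarith, ?_⟩, ⟨by simp; linarith, k2.le⟩⟩, ⟨hfy, k1.le⟩, hcone'⟩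
    simp only
    have : s + t - s1 ≤ (B - x1) / c := by
      rw [le_div_iff₀ hc]
      have : y < B := k2
      nlinarith
    linarith
  have := hmax hZ
  simp at this
  linarith

theorem hasStrictFDerivAt_eval {𝕜 σ : Type*} [NontriviallyNormedField 𝕜] [Fintype σ]
    (P : MvPolynomial σ 𝕜) (x : σ → 𝕜) :
    HasStrictFDerivAt (fun x : σ → 𝕜 => MvPolynomial.eval x P)
      (∑ i, MvPolynomial.eval x (pderiv i P) • (ContinuousLinearMap.proj i : (σ → 𝕜) →L[𝕜] 𝕜))
      x := by
  classical
  induction P using MvPolynomial.induction_on with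
  | C a =>
    refine ((hasStrictFDerivAt_const (𝕜 := 𝕜) a x).congr_fderiv ?_).congr_of_eventuallyEq
      (Eventually.of_forall fun y => ?_)
    · ext u; simp
    · simp
  | add p q hp hq =>
    refine ((hp.add hq).congr_fderiv ?_).congr_of_eventuallyEq
      (Eventually.of_forall fun y => ?_)
    · ext u; simp [add_mul, Finset.sum_add_distrib]
    · simp
  | mul_X p i hp =>
    have h := hp.mul ((ContinuousLinearMap.proj (R := 𝕜) (φ := fun _ : σ => 𝕜) i).hasStrictFDerivAt
      (x := x))
    refine (h.congr_fderiv ?_).congr_of_eventuallyEq (Eventually.of_forall fun y => ?_)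
    · ext u
      simp only [map_mul, eval_X, Derivation.leibniz, pderiv_X, smul_eq_mul, map_add, add_smul,
        Finset.sum_add_distrib, Finset.smul_sum]
      simp [Pi.single_apply, apply_ite, Finset.mul_sum, add_mul, mul_assoc,
        Finset.sum_add_distrib, ite_mul]
    · simp

theorem continuous_eval' {σ : Type*} (P : MvPolynomial σ ℝ) :
    Continuous (fun x : σ → ℝ => MvPolynomial.eval x P) := MvPolynomial.continuous_eval P

open Hyperreal (ofSeq ofSeq_surjective ofSeq_lt_ofSeq ofSeq_le_ofSeq)

instance hyperrealAlgebra : Algebra ℝ Hyperreal := Hyperreal.coeRingHom.toAlgebra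

theorem algebraMap_hyperreal (c : ℝ) : algebraMap ℝ Hyperreal c = (c : Hyperreal) := rfl

instance : CharZero Hyperreal := inferInstance

theorem aeval_ofSeq {σ : Type*} (x : σ → ℕ → ℝ) (P : MvPolynomial σ ℝ) :
    aeval (fun i => ofSeq (x i)) P = ofSeq (fun k => MvPolynomial.eval (fun i => x i k) P) := by
  induction P using MvPolynomial.induction_on with
  | C a => simp only [aeval_C, eval_C]; rfl
  | add p q hp hq => simp only [map_add, hp, hq]; rfl
  | mul_X p i hp => simp only [map_mul, hp, aeval_X, eval_X]; rfl

theorem ofSeq_eq_ofSeq {u v : ℕ → ℝ} :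
    ofSeq u = ofSeq v ↔ ∀ᶠ k in hyperfilter ℕ, u k = v k := by
  exact Filter.Germ.coe_eq

theorem coe_eq_ofSeq (c : ℝ) : (c : Hyperreal) = ofSeq (fun _ => c) := rfl
theorem infinite_transcendental (r : Hyperreal) (hr : ∀ R : ℝ, (R : Hyperreal) < r) :
    Transcendental ℝ r := by
  rintro ⟨q, hq0, hq⟩
  obtain ⟨ρ, rfl⟩ := ofSeq_surjective r
  have haev : Polynomial.aeval (ofSeq ρ) q = ofSeq (fun k => q.eval (ρ k)) := by
    induction q using Polynomial.induction_on' with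
    | add p q hp hq => 
      rw [map_add]
      have h1 : ∀ p : Polynomial ℝ, Polynomial.aeval (ofSeq ρ) p = ofSeq (fun k => p.eval (ρ k)) := by
        intro p
        have := aeval_ofSeq (fun _ : Unit => ρ) (Polynomial.aeval (MvPolynomial.X ()) p)
        rw [← Polynomial.aeval_algHom_apply] at this
        simp only [aeval_X] at this
        rw [this]
        congr 1
        funext k
        have h2 := (Polynomial.aeval_algHom_apply (MvPolynomial.aeval (R := ℝ) (fun _ : Unit => ρ k)) (MvPolynomial.X ()) p)
        simp only [aeval_X] at h2
        rw [Polynomial.coe_aeval_eq_eval] at h2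
        rw [h2]; rfl
      rw [h1, h1]
      simp only [Polynomial.eval_add]; rfl
    | monomial n a =>
      simp only [Polynomial.aeval_monomial, Polynomial.eval_monomial]; rfl
  rw [haev] at hq
  have hev := ofSeq_eq_ofSeq.1 (hq.trans (show (0 : Hyperreal) = ofSeq (fun _ => 0) from rfl))
  obtain ⟨R, hR⟩ := (q.roots.toFinset.finite_toSet).bddAbove
  have h2 := ofSeq_lt_ofSeq.1 (hr R)
  obtain ⟨k, hk1, hk2⟩ := (hev.and h2).exists
  have : ρ k ≤ R := hR (by simp [hq0, hk1])
  exact absurd hk2 (not_lt.2 this)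

theorem algInd_first (r x : Hyperreal) (hr : ∀ R : ℝ, (R : Hyperreal) < r) :
    AlgebraicIndependent ℝ (fun j : {j : Fin 2 // j ≠ 1} => (![r, x] : Fin 2 → Hyperreal) j) := by
  let u : Unique {j : Fin 2 // j ≠ 1} :=
    ⟨⟨⟨0, by decide⟩⟩, fun ⟨j, hj⟩ => by
      apply Subtype.ext
      fin_cases j
      · rfl
      · exact absurd rfl hj⟩
  rw [algebraicIndependent_unique_type_iff]
  exact infinite_transcendental r hr

theorem exists_real_bound {P E : MvPolynomial (Fin 2) ℝ} (hP : Irreducible P) (hPE : ¬ P ∣ E) :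
    ∃ R0 : ℝ, ∀ r x : ℝ, R0 < r → MvPolynomial.eval ![r, x] P = 0 →
      MvPolynomial.eval ![r, x] E ≠ 0 := by
  by_contra! hc
  choose ρ ξ h1 h2 h3 using fun k : ℕ => hc (k : ℝ)
  have hr : ∀ R : ℝ, (R : Hyperreal) < ofSeq ρ := by
    intro R
    rw [coe_eq_ofSeq, ofSeq_lt_ofSeq]
    have : ∀ᶠ k in atTop, R < ρ k := by
      filter_upwards [eventually_ge_atTop ⌈R⌉₊] with k hk
      exact lt_of_le_of_lt (Nat.ceil_le.1 hk) (h1 k)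
    exact Nat.hyperfilter_le_atTop this
  have haux : ∀ Q : MvPolynomial (Fin 2) ℝ, (∀ k, MvPolynomial.eval ![ρ k, ξ k] Q = 0) →
      aeval ![ofSeq ρ, ofSeq ξ] Q = 0 := by
    intro Q hQ
    have := aeval_ofSeq ![ρ, ξ] Q
    have e1 : (fun i => ofSeq ((![ρ, ξ] : Fin 2 → ℕ → ℝ) i)) = ![ofSeq ρ, ofSeq ξ] := by
      ext i; fin_cases i <;> rfl
    rw [e1] at this
    rw [this]
    have e2 : ∀ k, (fun i => (![ρ, ξ] : Fin 2 → ℕ → ℝ) i k) = ![ρ k, ξ k] := by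
      intro k; ext i; fin_cases i <;> rfl
    simp only [e2, hQ]; rfl
  exact dimension_drop hP hPE ![ofSeq ρ, ofSeq ξ] (haux P h2) (haux E h3) 1 (algInd_first _ _ hr)

theorem aeval_ofSeq₂ (ρ ξ : ℕ → ℝ) (Q : MvPolynomial (Fin 2) ℝ) :
    aeval ![ofSeq ρ, ofSeq ξ] Q = ofSeq (fun k => MvPolynomial.eval ![ρ k, ξ k] Q) := by
  have := aeval_ofSeq ![ρ, ξ] Q
  have e1 : (fun i => ofSeq ((![ρ, ξ] : Fin 2 → ℕ → ℝ) i)) = ![ofSeq ρ, ofSeq ξ] := by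
    ext i; fin_cases i <;> rfl
  rw [e1] at this
  rw [this]
  have e2 : ∀ k, (fun i => (![ρ, ξ] : Fin 2 → ℕ → ℝ) i k) = ![ρ k, ξ k] := by
    intro k; ext i; fin_cases i <;> rfl
  simp only [e2]

theorem aeval_ofSeq₃ (ρ ξ η : ℕ → ℝ) (Q : MvPolynomial (Fin 3) ℝ) :
    aeval ![ofSeq ρ, ofSeq ξ, ofSeq η] Q
      = ofSeq (fun k => MvPolynomial.eval ![ρ k, ξ k, η k] Q) := by
  have := aeval_ofSeq ![ρ, ξ, η] Q
  have e1 : (fun i => ofSeq ((![ρ, ξ, η] : Fin 3 → ℕ → ℝ) i)) =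
      ![ofSeq ρ, ofSeq ξ, ofSeq η] := by
    ext i; fin_cases i <;> rfl
  rw [e1] at this
  rw [this]
  have e2 : ∀ k, (fun i => (![ρ, ξ, η] : Fin 3 → ℕ → ℝ) i k) = ![ρ k, ξ k, η k] := by
    intro k; ext i; fin_cases i <;> rfl
  simp only [e2]

theorem hasDerivAt_exp_curve (P : MvPolynomial (Fin 2) ℝ) (s x α : ℝ) :
    HasDerivAt (fun t => MvPolynomial.eval ![Real.exp (s + t), x + α * t] P)
      (MvPolynomial.eval ![Real.exp s, x] (X 0 * pderiv 0 P) +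
        α * MvPolynomial.eval ![Real.exp s, x] (pderiv 1 P)) 0 := by
  have hc : HasDerivAt (fun t : ℝ => (![Real.exp (s + t), x + α * t] : Fin 2 → ℝ))
      ![Real.exp s, α] 0 := by
    rw [hasDerivAt_pi]
    intro i
    fin_cases i
    · have : HasDerivAt (fun t : ℝ => Real.exp (s + t)) (Real.exp (s + 0) * 1) 0 :=
        ((hasDerivAt_id (0:ℝ)).const_add s).exp
      simpa using this
    · have : HasDerivAt (fun t : ℝ => x + α * t) (α * 1) 0 :=
        ((hasDerivAt_id (0:ℝ)).const_mul α).const_add x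
      simpa using this
  have hF := (hasStrictFDerivAt_eval P ![Real.exp (s + 0), x + α * 0]).hasFDerivAt
  have := hF.comp_hasDerivAt (0:ℝ) hc
  refine this.congr_deriv ?_
  simp [Fin.sum_univ_two]
  ring

theorem continuous_exp_eval (P : MvPolynomial (Fin 2) ℝ) :
    Continuous (fun p : ℝ × ℝ => MvPolynomial.eval ![Real.exp p.1, p.2] P) := by
  refine (continuous_eval' P).comp (continuous_pi fun i => ?_)
  fin_cases i
  · exact Real.continuous_exp.comp continuous_fst
  · exact continuous_snd

theorem small_deriv_aux (r x : Hyperreal) (hr : ∀ R : ℝ, (R : Hyperreal) < r) (M : ℝ)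
    (hx : x ≤ M) (hdep : ¬ AlgebraicIndependent ℝ ![r, x])
    (D : Derivation ℝ Hyperreal Hyperreal) (hD : D r = r) (ε : ℝ) (hε : 0 < ε) :
    D x < ε := by
  by_contra! hcon
  obtain ⟨P, hP, hPp, hi⟩ := exists_irreducible _ hdep
  have hr0 : r ≠ 0 := (hr 0).ne'
  have hch := derivation_aeval D ![r, x] P
  rw [hPp, map_zero, Fin.sum_univ_two] at hch
  simp only [Matrix.cons_val_zero, Matrix.cons_val_one, hD] at hch
  set A := aeval ![r, x] (pderiv 0 P) with hA
  set Bx := aeval ![r, x] (pderiv 1 P) with hB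
  have hB0 : Bx ≠ 0 := by
    intro h
    rw [h] at hch
    have hA0 : A = 0 := by
      rw [zero_mul, add_zero] at hch
      rcases mul_eq_zero.1 hch.symm with h | h
      · exact h
      · exact absurd h hr0
    obtain ⟨i, hi⟩ := hi
    fin_cases i
    · exact hi hA0
    · exact hi h
  set c := ε / 2 with hc
  let E : MvPolynomial (Fin 2) ℝ := pderiv 1 P * ((X 0 * pderiv 0 P) ^ 2 - C (c ^ 2) * (pderiv 1 P) ^ 2)
    * (X 1 - C (M + 1))
  have hεc : (0 : Hyperreal) < (c : ℝ) := by exact_mod_cast (by positivity : (0:ℝ) < c)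
  have hcε : ((c : ℝ) : Hyperreal) < D x :=
    lt_of_lt_of_le (by exact_mod_cast (by rw [hc]; linarith : c < ε)) hcon
  have hrA : r * A = - (Bx * D x) := by linear_combination -hch
  have hEp : aeval ![r, x] E ≠ 0 := by
    simp only [E, map_mul, map_sub, map_pow, aeval_X, aeval_C, algebraMap_hyperreal,
      Matrix.cons_val_zero, Matrix.cons_val_one]
    rw [← hA, ← hB, hrA]
    refine mul_ne_zero (mul_ne_zero hB0 ?_) ?_
    · have h2 : (-(Bx * D x)) ^ 2 - ((c : Hyperreal)) ^ 2 * Bx ^ 2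
        = Bx ^ 2 * ((D x - (c:ℝ)) * (D x + (c : ℝ))) := by ring
      rw [h2]
      exact mul_ne_zero (pow_ne_zero _ hB0) (mul_ne_zero (sub_pos.2 hcε).ne'
        (add_pos (hεc.trans hcε) hεc).ne')
    · have : x < ((M + 1 : ℝ) : Hyperreal) := lt_of_le_of_lt hx (by exact_mod_cast (lt_add_one M))
      exact (sub_neg.2 this).ne
  have hPE : ¬ P ∣ E := by
    rintro ⟨Q, hQ⟩
    rw [hQ, map_mul, hPp, zero_mul] at hEp
    exact hEp rfl
  obtain ⟨R0, hR0⟩ := exists_real_bound hP hPE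
  have hineq : (c : Hyperreal) * Bx ^ 2 ≤ - (r * A) * Bx := by
    rw [hrA]
    have : 0 ≤ Bx ^ 2 := sq_nonneg _
    nlinarith
  clear_value A Bx
  obtain ⟨ρ, rfl⟩ := ofSeq_surjective r
  obtain ⟨ξ, rfl⟩ := ofSeq_surjective x
  rw [aeval_ofSeq₂] at hPp hA hB
  subst hA hB
  have e1 := ofSeq_eq_ofSeq.1 (hPp.trans (show (0 : Hyperreal) = ofSeq (fun _ => 0) from rfl))
  have e2 : ∀ᶠ k in hyperfilter ℕ, c * MvPolynomial.eval ![ρ k, ξ k] (pderiv 1 P) ^ 2 ≤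
      - (ρ k * MvPolynomial.eval ![ρ k, ξ k] (pderiv 0 P)) *
        MvPolynomial.eval ![ρ k, ξ k] (pderiv 1 P) := ofSeq_le_ofSeq.1 hineq
  have e3 : ∀ᶠ k in hyperfilter ℕ, R0 < ρ k := ofSeq_lt_ofSeq.1 (hr R0)
  have e4 : ∀ᶠ k in hyperfilter ℕ, 0 < ρ k := ofSeq_lt_ofSeq.1 (hr 0)
  have e5 : ∀ᶠ k in hyperfilter ℕ, ξ k ≤ M := ofSeq_le_ofSeq.1 hx
  obtain ⟨k, k1, k2, k3, k4, k5⟩ := (e1.and (e2.and (e3.and (e4.and e5)))).exists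
  refine real_flow (fun p => MvPolynomial.eval ![Real.exp p.1, p.2] P)
    (fun p => MvPolynomial.eval ![Real.exp p.1, p.2] (X 0 * pderiv 0 P))
    (fun p => MvPolynomial.eval ![Real.exp p.1, p.2] (pderiv 1 P))
    (continuous_exp_eval _) (continuous_exp_eval _) (continuous_exp_eval _)
    (fun s x α => hasDerivAt_exp_curve P s x α) c (M + 1) (Real.log (ρ k)) (ξ k)
    (by positivity) ?_ (by linarith) ?_ ?_
  · intro s x hs hf
    have hs' : R0 < Real.exp s := by
      refine lt_of_lt_of_le k3 ?_
      rw [← Real.log_le_iff_le_exp k4]; exact hs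
    have := hR0 _ x hs' hf
    simp only [E, map_mul, map_sub, map_pow, eval_X, eval_C, Matrix.cons_val_zero,
      Matrix.cons_val_one] at this
    refine ⟨fun h => this ?_, fun h => this ?_, fun h => this ?_⟩
    · rw [h]; ring
    · simp only [map_mul, eval_X, Matrix.cons_val_zero] at h
      rw [h]; ring
    · rw [h]; ring
  · simp only [Real.exp_log k4]; exact k1
  · simp only [Real.exp_log k4, map_mul, eval_X, Matrix.cons_val_zero]; exact k2

theorem dep_neg (r x : Hyperreal) (hdep : ¬ AlgebraicIndependent ℝ ![r, x]) :
    ¬ AlgebraicIndependent ℝ ![r, -x] := by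
  rw [algebraicIndependent_iff] at hdep ⊢
  push Not at hdep ⊢
  obtain ⟨Q, h1, h2⟩ := hdep
  let θ : MvPolynomial (Fin 2) ℝ →ₐ[ℝ] MvPolynomial (Fin 2) ℝ := aeval ![X 0, - X 1]
  have hθ : θ.comp θ = AlgHom.id ℝ _ := by
    apply MvPolynomial.algHom_ext
    intro i; fin_cases i <;> simp [θ]
  have hcomp : (aeval ![r, -x]).comp θ = aeval (R := ℝ) ![r, x] := by
    apply MvPolynomial.algHom_ext
    intro i; fin_cases i <;> simp [θ]
  refine ⟨θ Q, ?_, fun h => h2 ?_⟩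
  · have := DFunLike.congr_fun hcomp Q
    rw [AlgHom.comp_apply] at this
    rw [this, h1]
  · have := DFunLike.congr_fun hθ Q
    rw [AlgHom.comp_apply, h, map_zero] at this
    exact this.symm

theorem small_deriv (r x : Hyperreal) (hr : ∀ R : ℝ, (R : Hyperreal) < r) (M : ℝ)
    (hx : |x| ≤ M) (hdep : ¬ AlgebraicIndependent ℝ ![r, x])
    (D : Derivation ℝ Hyperreal Hyperreal) (hD : D r = r) (ε : ℝ) (hε : 0 < ε) :
    |D x| < ε := by
  rw [abs_le] at hx
  rw [abs_lt]
  have h1 := small_deriv_aux r x hr M hx.2 hdep D hD ε hε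
  have h2 := small_deriv_aux r (-x) hr M (by linarith [hx.1]) (dep_neg _ _ hdep) D hD ε hε
  rw [map_neg] at h2
  exact ⟨by linarith, h1⟩

theorem hasStrictFDerivAt_slice (P : MvPolynomial (Fin 3) ℝ) (r : ℝ) (q : ℝ × ℝ) :
    HasStrictFDerivAt (fun q : ℝ × ℝ => MvPolynomial.eval ![r, q.1, q.2] P)
      (MvPolynomial.eval ![r, q.1, q.2] (pderiv 1 P) • ContinuousLinearMap.fst ℝ ℝ ℝ +
       MvPolynomial.eval ![r, q.1, q.2] (pderiv 2 P) • ContinuousLinearMap.snd ℝ ℝ ℝ) q := by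
  have hφ : HasStrictFDerivAt (fun q : ℝ × ℝ => (![r, q.1, q.2] : Fin 3 → ℝ))
      (ContinuousLinearMap.pi ![(0 : ℝ × ℝ →L[ℝ] ℝ), ContinuousLinearMap.fst ℝ ℝ ℝ,
        ContinuousLinearMap.snd ℝ ℝ ℝ]) q := by
    rw [hasStrictFDerivAt_pi']
    intro i
    fin_cases i
    · exact hasStrictFDerivAt_const r q
    · exact hasStrictFDerivAt_fst
    · exact hasStrictFDerivAt_snd
  have := (hasStrictFDerivAt_eval P ![r, q.1, q.2]).comp q hφ
  refine this.congr_fderiv ?_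
  ext <;> simp [Fin.sum_univ_three]

theorem exists_critical (P Φ : MvPolynomial (Fin 3) ℝ) (r B g0 h0 : ℝ)
    (hB : g0 ^ 2 + h0 ^ 2 ≤ B) (hP : MvPolynomial.eval ![r, g0, h0] P = 0) :
    ∃ g h : ℝ, g ^ 2 + h ^ 2 ≤ B ∧ MvPolynomial.eval ![r, g, h] P = 0 ∧
      MvPolynomial.eval ![r, g0, h0] Φ ≤ MvPolynomial.eval ![r, g, h] Φ ∧
      MvPolynomial.eval ![r, g, h] ((pderiv 1 P * pderiv 2 Φ - pderiv 2 P * pderiv 1 Φ) *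
        (C B - X 1 ^ 2 - X 2 ^ 2)) = 0 := by
  let fP : ℝ × ℝ → ℝ := fun q => MvPolynomial.eval ![r, q.1, q.2] P
  let fΦ : ℝ × ℝ → ℝ := fun q => MvPolynomial.eval ![r, q.1, q.2] Φ
  have cP : Continuous fP := continuous_iff_continuousAt.2 fun q =>
    (hasStrictFDerivAt_slice P r q).continuousAt
  have cΦ : Continuous fΦ := continuous_iff_continuousAt.2 fun q =>
    (hasStrictFDerivAt_slice Φ r q).continuousAt
  let K : Set (ℝ × ℝ) := (Set.Icc (-(B + 1)) (B + 1) ×ˢ Set.Icc (-(B + 1)) (B + 1)) ∩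
    ({q | q.1 ^ 2 + q.2 ^ 2 ≤ B} ∩ {q | fP q = 0})
  have hK : ∀ q : ℝ × ℝ, q.1 ^ 2 + q.2 ^ 2 ≤ B → fP q = 0 → q ∈ K := by
    intro q h1 h2
    have b1 := sq_nonneg (q.1 + 1 / 2)
    have b2 := sq_nonneg (q.1 - 1 / 2)
    have b3 := sq_nonneg (q.2 + 1 / 2)
    have b4 := sq_nonneg (q.2 - 1 / 2)
    have b5 := sq_nonneg q.1
    have b6 := sq_nonneg q.2
    ring_nf at b1 b2 b3 b4
    refine ⟨⟨⟨?_, ?_⟩, ⟨?_, ?_⟩⟩, h1, h2⟩ <;> linarith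
  have hKc : IsCompact K := by
    apply (isCompact_Icc.prod isCompact_Icc).inter_right
    exact (isClosed_le (by fun_prop) (by fun_prop)).inter (isClosed_eq cP continuous_const)
  have hmem0 : (g0, h0) ∈ K := hK (g0, h0) (by simpa using hB) (by simpa [fP] using hP)
  obtain ⟨⟨g, h⟩, hmem, hmax⟩ := hKc.exists_isMaxOn ⟨(g0, h0), hmem0⟩ cΦ.continuousOn
  have hgB : g ^ 2 + h ^ 2 ≤ B := by simpa using hmem.2.1
  have hgP : fP (g, h) = 0 := by simpa using hmem.2.2
  have hge : fΦ (g0, h0) ≤ fΦ (g, h) := by simpa using hmax hmem0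
  refine ⟨g, h, hgB, by simpa [fP] using hgP, by simpa [fΦ] using hge, ?_⟩
  rcases hgB.eq_or_lt with heq | hlt
  · have : MvPolynomial.eval ![r, g, h] (C B - X 1 ^ 2 - X 2 ^ 2) = 0 := by
      simp; linarith
    rw [map_mul, this, mul_zero]
  · have hloc : IsLocalExtrOn fΦ {q | fP q = fP (g, h)} (g, h) := by
      right
      have hn : ∀ᶠ q in nhds (g, h), q.1 ^ 2 + q.2 ^ 2 < B :=
        ContinuousAt.eventually_lt (f := fun q : ℝ × ℝ => q.1 ^ 2 + q.2 ^ 2)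
          (g := fun _ => B) (by fun_prop) (by fun_prop) hlt
      filter_upwards [nhdsWithin_le_nhds hn, self_mem_nhdsWithin] with q h1 h2
      exact hmax (hK q h1.le (Eq.trans h2 hgP))
    obtain ⟨a, b, hab, hsum⟩ := hloc.exists_multipliers_of_hasStrictFDerivAt_1d
      (hasStrictFDerivAt_slice P r (g, h)) (hasStrictFDerivAt_slice Φ r (g, h))
    have s1 := DFunLike.congr_fun hsum ((1 : ℝ), (0 : ℝ))
    have s2 := DFunLike.congr_fun hsum ((0 : ℝ), (1 : ℝ))
    simp at s1 s2
    rw [map_mul, map_sub, map_mul, map_mul, mul_eq_zero]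
    left
    by_contra hne
    apply hab
    set x1 := MvPolynomial.eval ![r, g, h] (pderiv 1 P)
    set x2 := MvPolynomial.eval ![r, g, h] (pderiv 2 P)
    set y1 := MvPolynomial.eval ![r, g, h] (pderiv 1 Φ)
    set y2 := MvPolynomial.eval ![r, g, h] (pderiv 2 Φ)
    have ha : a * (x1 * y2 - x2 * y1) = 0 := by linear_combination y2 * s1 - y1 * s2
    have hb : b * (x1 * y2 - x2 * y1) = 0 := by linear_combination x1 * s2 - x2 * s1
    rw [(mul_eq_zero.1 ha).resolve_right hne, (mul_eq_zero.1 hb).resolve_right hne]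
    rfl

theorem exists_euler (r : Hyperreal) (hr : ∀ R : ℝ, (R : Hyperreal) < r) :
    ∃ D : Derivation ℝ Hyperreal Hyperreal, D r = r := by
  have h : AlgebraicIndependent ℝ (fun _ : Unit => r) := by
    rw [algebraicIndependent_unique_type_iff]; exact infinite_transcendental r hr
  obtain ⟨D, hD⟩ := exists_derivation h (fun _ => r)
  exact ⟨D, hD ()⟩

theorem sq_sum_small {ε : ℝ} (hε : 0 < ε) : ∃ δ : ℝ, 0 < δ ∧ ∀ x y : Hyperreal,
    |x| < δ → |y| < δ → x ^ 2 + y ^ 2 < ε := by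
  refine ⟨min 1 (ε / 2), by positivity, fun x y hx hy => ?_⟩
  have key : ∀ x : Hyperreal, |x| < ((min 1 (ε / 2) : ℝ) : Hyperreal) →
      x ^ 2 < ((ε / 2 : ℝ) : Hyperreal) := by
    intro x hx
    have h1 : |x| < ((1 : ℝ) : Hyperreal) :=
      lt_of_lt_of_le hx (by exact_mod_cast min_le_left _ _)
    have h2 : |x| < ((ε / 2 : ℝ) : Hyperreal) :=
      lt_of_lt_of_le hx (by exact_mod_cast min_le_right _ _)
    have h1' : |x| < 1 := by simpa using h1
    have h3 := abs_nonneg x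
    rw [← sq_abs]
    nlinarith
  have e : (ε : Hyperreal) = ((ε / 2 : ℝ) : Hyperreal) + ((ε / 2 : ℝ) : Hyperreal) := by
    exact_mod_cast (add_halves ε).symm
  rw [e]
  exact add_lt_add (key x hx) (key y hy)

theorem not_algInd_of_drop {P E : MvPolynomial (Fin 3) ℝ} (hP : Irreducible P) (hPE : ¬ P ∣ E)
    (r g h : Hyperreal) (h1 : aeval ![r, g, h] P = 0) (h2 : aeval ![r, g, h] E = 0) :
    ¬ AlgebraicIndependent ℝ ![r, g] ∧ ¬ AlgebraicIndependent ℝ ![r, h] := by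
  constructor
  · intro hi
    have hinj : Function.Injective (fun j : {j : Fin 3 // j ≠ 2} =>
      if j.1 = 0 then (0 : Fin 2) else 1) := by decide
    refine dimension_drop hP hPE _ h1 h2 2 ?_
    convert! hi.comp _ hinj using 1
    ext ⟨j, hj⟩
    fin_cases j
    · rfl
    · rfl
    · exact absurd rfl hj
  · intro hi
    have hinj : Function.Injective (fun j : {j : Fin 3 // j ≠ 1} =>
      if j.1 = 0 then (0 : Fin 2) else 1) := by decide
    refine dimension_drop hP hPE _ h1 h2 1 ?_
    convert! hi.comp _ hinj using 1
    ext ⟨j, hj⟩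
    fin_cases j
    · rfl
    · exact absurd rfl hj
    · rfl

theorem key_dep (r g h a b l : Hyperreal) (hr : ∀ R : ℝ, (R : Hyperreal) < r) (M : ℝ)
    (hg : |g| ≤ M) (hh : |h| ≤ M) (hab : a ^ 2 + b ^ 2 = 1)
    (hD : ∀ D : Derivation ℝ Hyperreal Hyperreal, l * r * D r = a * D g + b * D h)
    (h1 : ¬ AlgebraicIndependent ℝ ![r, g]) (h2 : ¬ AlgebraicIndependent ℝ ![r, h])
    (ε : ℝ) (hε : 0 < ε) : (l * r ^ 2) ^ 2 < ε := by
  obtain ⟨δ, hδ, hs⟩ := sq_sum_small hε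
  obtain ⟨D, hDr⟩ := exists_euler r hr
  have h3 := hs _ _ (small_deriv r g hr M hg h1 D hDr δ hδ) (small_deriv r h hr M hh h2 D hDr δ hδ)
  have h4 := hD D
  rw [hDr] at h4
  have h5 : l * r ^ 2 = a * D g + b * D h := by rw [← h4]; ring
  rw [h5]
  refine lt_of_le_of_lt ?_ h3
  have : (a * D g + b * D h) ^ 2 + (a * D h - b * D g) ^ 2
      = (a ^ 2 + b ^ 2) * (D g ^ 2 + D h ^ 2) := by ring
  rw [hab, one_mul] at this
  linarith [sq_nonneg (a * D h - b * D g)]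

set_option maxHeartbeats 2000000 in
theorem key_ind (r g h a b l : Hyperreal) (hr : ∀ R : ℝ, (R : Hyperreal) < r) (M : ℝ)
    (hg : |g| ≤ M) (hh : |h| ≤ M) (hab : a ^ 2 + b ^ 2 = 1)
    (hD : ∀ D : Derivation ℝ Hyperreal Hyperreal, l * r * D r = a * D g + b * D h)
    (h1 : AlgebraicIndependent ℝ ![r, g]) (ε : ℝ) (hε : 0 < ε) : (l * r ^ 2) ^ 2 < ε := by
  have hr0 : r ≠ 0 := (hr 0).ne'
  have hεH : (0 : Hyperreal) < ε := by exact_mod_cast hε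
  by_cases h3 : AlgebraicIndependent ℝ ![r, g, h]
  · obtain ⟨D, hDv⟩ := exists_derivation h3 ![r, 0, 0]
    have d0 := hDv 0
    have d1 := hDv 1
    have d2 := hDv 2
    simp at d0 d1 d2
    have := hD D
    rw [d0, d1, d2] at this
    have : l * r ^ 2 = 0 := by linear_combination this
    rw [this]
    simpa using hεH
  obtain ⟨P, hP, hPp, hi⟩ := exists_irreducible _ h3
  obtain ⟨D1, hD1⟩ := exists_derivation h1 ![1, 0]
  obtain ⟨D2, hD2⟩ := exists_derivation h1 ![0, 1]
  have d10 := hD1 0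
  have d11 := hD1 1
  have d20 := hD2 0
  have d21 := hD2 1
  simp at d10 d11 d20 d21
  have c1 := derivation_aeval D1 ![r, g, h] P
  have c2 := derivation_aeval D2 ![r, g, h] P
  rw [hPp, map_zero, Fin.sum_univ_three] at c1 c2
  have k1 := hD D1
  have k2 := hD D2
  simp [d10, d11, d20, d21] at c1 c2 k1 k2
  set u1 := D1 h
  set u2 := D2 h
  set Pr := aeval ![r, g, h] (pderiv 0 P) with hPr
  set Pg := aeval ![r, g, h] (pderiv 1 P) with hPg
  set Ph := aeval ![r, g, h] (pderiv 2 P) with hPh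
  have hPh0 : Ph ≠ 0 := by
    intro h0
    rw [h0] at c1 c2
    simp at c1 c2
    obtain ⟨i, hi⟩ := hi
    fin_cases i
    · exact hi c1.symm
    · exact hi c2.symm
    · exact hi h0
  have hPos : 0 < Pg ^ 2 + Ph ^ 2 := by positivity
  have hid : r ^ 2 * Pr ^ 2 = (l * r ^ 2) ^ 2 * (Pg ^ 2 + Ph ^ 2) := by
    have e1 : Pr = - (Ph * u1) := by linear_combination -c1
    have e2 : Pg = - (Ph * u2) := by linear_combination -c2
    have e3 : a = - (b * u2) := by linear_combination -k2
    have e4 : (l * r ^ 2) = r * (b * u1) := by rw [← k1]; ring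
    rw [e4, e1, e2]
    rw [e3] at hab
    linear_combination (-(r ^ 2 * Ph ^ 2 * u1 ^ 2)) * hab
  by_contra! hcon
  let Q : MvPolynomial (Fin 3) ℝ := X 0 ^ 2 * pderiv 0 P ^ 2 -
    C (ε / 2) * (pderiv 1 P ^ 2 + pderiv 2 P ^ 2)
  have hQ' : ∀ p : Fin 3 → Hyperreal, aeval p Q = p 0 ^ 2 * aeval p (pderiv 0 P) ^ 2 -
      ((ε / 2 : ℝ) : Hyperreal) * (aeval p (pderiv 1 P) ^ 2 + aeval p (pderiv 2 P) ^ 2) := by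
    intro p
    simp only [Q, map_sub, map_mul, map_pow, map_add, aeval_X, aeval_C, algebraMap_hyperreal]
  have hhalf : ((ε / 2 : ℝ) : Hyperreal) < ε := by exact_mod_cast half_lt_self hε
  have hQp : 0 < aeval ![r, g, h] Q := by
    rw [hQ']
    simp only [Matrix.cons_val_zero]
    rw [← hPr, ← hPg, ← hPh, hid, ← sub_mul]
    exact mul_pos (sub_pos.2 (hhalf.trans_le hcon)) hPos
  let B : ℝ := 2 * M ^ 2 + 1
  have hB0 : 0 < B := by positivity
  let J : MvPolynomial (Fin 3) ℝ → MvPolynomial (Fin 3) ℝ := fun Φ =>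
    pderiv 1 P * pderiv 2 Φ - pderiv 2 P * pderiv 1 Φ
  have hw : ∃ w : MvPolynomial (Fin 3) ℝ, aeval ![r, g, h] (J (Q * w)) ≠ 0 ∧
      ∀ x y z : ℝ, y ^ 2 + z ^ 2 ≤ B → 0 < MvPolynomial.eval ![x, y, z] w := by
    by_cases hJ : aeval ![r, g, h] (J Q) = 0
    · refine ⟨C (B + 1) + X 1, ?_, ?_⟩
      · have e : J (Q * (C (B + 1) + X 1)) = J Q * (C (B + 1) + X 1) - Q * pderiv 2 P := by
          simp only [J, Derivation.leibniz, map_add, pderiv_C, smul_eq_mul, pderiv_X_self,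
            pderiv_X_of_ne (show (1 : Fin 3) ≠ 2 by decide)]
          ring
        rw [e, map_sub, map_mul, hJ, zero_mul, zero_sub, map_mul]
        exact neg_ne_zero.2 (mul_ne_zero hQp.ne' hPh0)
      · intro x y z hyz
        simp
        nlinarith [sq_nonneg (y + 1), sq_nonneg z]
    · exact ⟨1, by simpa using hJ, by simp⟩
  obtain ⟨w, hw1, hw2⟩ := hw
  let E := J (Q * w) * (C B - X 1 ^ 2 - X 2 ^ 2)
  have hBgh : g ^ 2 + h ^ 2 < (B : ℝ) := by
    have q1 : g ^ 2 ≤ (M : Hyperreal) ^ 2 := by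
      rw [← sq_abs g]; exact pow_le_pow_left₀ (abs_nonneg _) hg 2
    have q2 : h ^ 2 ≤ (M : Hyperreal) ^ 2 := by
      rw [← sq_abs h]; exact pow_le_pow_left₀ (abs_nonneg _) hh 2
    have q3 : ((B : ℝ) : Hyperreal) = 2 * (M : Hyperreal) ^ 2 + 1 := by
      change algebraMap ℝ Hyperreal B = 2 * (algebraMap ℝ Hyperreal M) ^ 2 + 1
      simp only [B, map_add, map_mul, map_pow, map_one, map_ofNat]
    rw [q3]; linarith
  have hEp : aeval ![r, g, h] E ≠ 0 := by
    rw [map_mul]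
    refine mul_ne_zero hw1 ?_
    simp [algebraMap_hyperreal]
    intro h0
    linarith
  have hPE : ¬ P ∣ E := by
    rintro ⟨S, hS⟩
    rw [hS, map_mul, hPp, zero_mul] at hEp
    exact hEp rfl
  have hQw : 0 < aeval ![r, g, h] (Q * w) := by
    rw [map_mul]
    refine mul_pos hQp ?_
    obtain ⟨ρ, rfl⟩ := ofSeq_surjective r
    obtain ⟨γ, rfl⟩ := ofSeq_surjective g
    obtain ⟨η, rfl⟩ := ofSeq_surjective h
    rw [aeval_ofSeq₃]
    refine ofSeq_lt_ofSeq.2 ?_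
    have : ∀ᶠ k in hyperfilter ℕ, γ k ^ 2 + η k ^ 2 < B := ofSeq_lt_ofSeq.1 hBgh
    filter_upwards [this] with k hk
    exact hw2 _ _ _ hk.le
  -- new point
  have hnew : ∃ g' h' : Hyperreal, g' ^ 2 + h' ^ 2 ≤ (B : ℝ) ∧ aeval ![r, g', h'] P = 0 ∧
      aeval ![r, g', h'] E = 0 ∧ 0 < aeval ![r, g', h'] Q := by
    clear hQp hQ' hid hPos hPh0 hi
    clear_value u1 u2 Pr Pg Ph
    clear c1 c2 k1 k2 hPr hPg hPh hD1 hD2 d10 d11 d20 d21 hEp hw1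
    obtain ⟨ρ, rfl⟩ := ofSeq_surjective r
    obtain ⟨γ, rfl⟩ := ofSeq_surjective g
    obtain ⟨η, rfl⟩ := ofSeq_surjective h
    rw [aeval_ofSeq₃] at hPp hQw
    have e1 := ofSeq_eq_ofSeq.1 (hPp.trans (show (0 : Hyperreal) = ofSeq (fun _ => 0) from rfl))
    have e2 : ∀ᶠ k in hyperfilter ℕ, γ k ^ 2 + η k ^ 2 < B := ofSeq_lt_ofSeq.1 hBgh
    have e3 : ∀ᶠ k in hyperfilter ℕ, 0 < MvPolynomial.eval ![ρ k, γ k, η k] (Q * w) :=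
      ofSeq_lt_ofSeq.1 hQw
    have hall : ∀ k, ∃ g' h' : ℝ, (MvPolynomial.eval ![ρ k, γ k, η k] P = 0 ∧
        γ k ^ 2 + η k ^ 2 < B ∧ 0 < MvPolynomial.eval ![ρ k, γ k, η k] (Q * w)) →
        (g' ^ 2 + h' ^ 2 ≤ B ∧ MvPolynomial.eval ![ρ k, g', h'] P = 0 ∧
          MvPolynomial.eval ![ρ k, g', h'] E = 0 ∧ 0 < MvPolynomial.eval ![ρ k, g', h'] Q) := by
      intro k
      by_cases hk : MvPolynomial.eval ![ρ k, γ k, η k] P = 0 ∧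
        γ k ^ 2 + η k ^ 2 < B ∧ 0 < MvPolynomial.eval ![ρ k, γ k, η k] (Q * w)
      · obtain ⟨g', h', b1, b2, b3, b4⟩ :=
          exists_critical P (Q * w) (ρ k) B (γ k) (η k) hk.2.1.le hk.1
        refine ⟨g', h', fun _ => ⟨b1, b2, b4, ?_⟩⟩
        have := lt_of_lt_of_le hk.2.2 b3
        rw [map_mul] at this
        exact (mul_pos_iff_of_pos_right (hw2 _ _ _ b1)).1 this
      · exact ⟨0, 0, fun h => absurd h hk⟩
    choose g' h' hgh using hall
    have ev : ∀ᶠ k in hyperfilter ℕ, (g' k ^ 2 + h' k ^ 2 ≤ B ∧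
        MvPolynomial.eval ![ρ k, g' k, h' k] P = 0 ∧
        MvPolynomial.eval ![ρ k, g' k, h' k] E = 0 ∧
        0 < MvPolynomial.eval ![ρ k, g' k, h' k] Q) := by
      filter_upwards [e1, e2, e3] with k h1 h2 h3
      exact hgh k ⟨h1, h2, h3⟩
    refine ⟨ofSeq g', ofSeq h', ?_, ?_, ?_, ?_⟩
    · exact ofSeq_le_ofSeq.2 (ev.mono fun k hk => hk.1)
    · rw [aeval_ofSeq₃]; exact ofSeq_eq_ofSeq.2 (ev.mono fun k hk => hk.2.1)
    · rw [aeval_ofSeq₃]; exact ofSeq_eq_ofSeq.2 (ev.mono fun k hk => hk.2.2.1)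
    · rw [aeval_ofSeq₃]; exact ofSeq_lt_ofSeq.2 (ev.mono fun k hk => hk.2.2.2)
  obtain ⟨g', h', n1, n2, n3, n4⟩ := hnew
  obtain ⟨i1, i2⟩ := not_algInd_of_drop hP hPE r g' h' n2 n3
  obtain ⟨δ, hδ, hs⟩ := sq_sum_small (half_pos hε)
  obtain ⟨D, hDr⟩ := exists_euler r hr
  have bb : ∀ x y : Hyperreal, x ^ 2 + y ^ 2 ≤ (B : ℝ) → |x| ≤ ((B + 1 : ℝ) : Hyperreal) := by
    intro x y hxy
    have e : ((B + 1 : ℝ) : Hyperreal) = (B : Hyperreal) + 1 := rfl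
    rw [e, abs_le]
    have c1 := sq_nonneg (x + 1)
    have c2 := sq_nonneg (x - 1)
    have c3 := sq_nonneg x
    have c4 := sq_nonneg y
    ring_nf at c1 c2
    constructor <;> linarith
  have h3 := hs _ _ (small_deriv r g' hr (B + 1) (bb g' h' n1) i1 D hDr δ hδ)
    (small_deriv r h' hr (B + 1) (bb h' g' (by linarith)) i2 D hDr δ hδ)
  have cc := derivation_aeval D ![r, g', h'] P
  rw [n2, map_zero, Fin.sum_univ_three] at cc
  simp [hDr] at cc
  rw [hQ'] at n4
  simp only [Matrix.cons_val_zero] at n4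
  set A0 := aeval ![r, g', h'] (pderiv 0 P)
  set A1 := aeval ![r, g', h'] (pderiv 1 P)
  set A2 := aeval ![r, g', h'] (pderiv 2 P)
  have e1 : r ^ 2 * A0 ^ 2 = (A1 * D g' + A2 * D h') ^ 2 := by
    have : A0 * r = - (A1 * D g' + A2 * D h') := by linear_combination -cc
    rw [← mul_pow, mul_comm, this]; ring
  have e2 : (A1 * D g' + A2 * D h') ^ 2 ≤ (A1 ^ 2 + A2 ^ 2) * (D g' ^ 2 + D h' ^ 2) := by
    have : (A1 * D g' + A2 * D h') ^ 2 + (A1 * D h' - A2 * D g') ^ 2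
      = (A1 ^ 2 + A2 ^ 2) * (D g' ^ 2 + D h' ^ 2) := by ring
    linarith [sq_nonneg (A1 * D h' - A2 * D g')]
  have e3 : (A1 ^ 2 + A2 ^ 2) * (D g' ^ 2 + D h' ^ 2) ≤
      (A1 ^ 2 + A2 ^ 2) * ((ε / 2 : ℝ) : Hyperreal) :=
    mul_le_mul_of_nonneg_left h3.le (by positivity)
  linarith

theorem key (r g h a b l : Hyperreal) (hr : ∀ R : ℝ, (R : Hyperreal) < r) (M : ℝ)
    (hg : |g| ≤ M) (hh : |h| ≤ M) (hab : a ^ 2 + b ^ 2 = 1)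
    (hD : ∀ D : Derivation ℝ Hyperreal Hyperreal, l * r * D r = a * D g + b * D h)
    (ε : ℝ) (hε : 0 < ε) : (l * r ^ 2) ^ 2 < ε := by
  by_cases h1 : AlgebraicIndependent ℝ ![r, g]
  · exact key_ind r g h a b l hr M hg hh hab hD h1 ε hε
  by_cases h2 : AlgebraicIndependent ℝ ![r, h]
  · exact key_ind r h g b a l hr M hh hg (by rw [add_comm]; exact hab)
      (fun D => by rw [hD D]; ring) h2 ε hε
  exact key_dep r g h a b l hr M hg hh hab hD h1 h2 ε hε

/-- exponent vector -/
def expo {n : ℕ} (p : (Fin n → ℕ) × (Fin n → ℕ)) : (Fin n ⊕ Fin n) →₀ ℕ :=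
  Finsupp.equivFunOnFinite.symm (Sum.elim p.1 p.2)

/-- the complex polynomial in twice `n` variables -/
def cpoly {n : ℕ} (c : MixedCoeff n) : MvPolynomial (Fin n ⊕ Fin n) ℂ :=
  c.sum fun p a => monomial (expo p) a

/-- the point `(z, conj z)` -/
def cpt {n : ℕ} (z : Fin n → ℂ) : Fin n ⊕ Fin n → ℂ :=
  Sum.elim z (fun i => (starRingEnd ℂ) (z i))

theorem eval_cpoly {n : ℕ} (c : MixedCoeff n) (z : Fin n → ℂ) :
    Mixed.eval c z = MvPolynomial.eval (cpt z) (cpoly c) := by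
  simp only [Mixed.eval, cpoly, Finsupp.sum, map_sum, eval_monomial]
  refine Finset.sum_congr rfl fun p _ => ?_
  rw [Finsupp.prod_fintype _ _ (by simp), Fintype.prod_sum_type]
  simp [cpt, expo, mul_assoc]

theorem dz_cpoly {n : ℕ} (c : MixedCoeff n) (z : Fin n → ℂ) (i : Fin n) :
    Mixed.dz c i z = MvPolynomial.eval (cpt z) (pderiv (Sum.inl i) (cpoly c)) := by
  classical
  simp only [Mixed.dz, cpoly, Finsupp.sum, map_sum, pderiv_monomial, eval_monomial]
  refine Finset.sum_congr rfl fun p _ => ?_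
  rw [Finsupp.prod_fintype _ _ (by simp), Fintype.prod_sum_type]
  simp [cpt, expo, mul_assoc, Finsupp.single_apply, eq_comm]

theorem dzbar_cpoly {n : ℕ} (c : MixedCoeff n) (z : Fin n → ℂ) (i : Fin n) :
    Mixed.dzbar c i z = MvPolynomial.eval (cpt z) (pderiv (Sum.inr i) (cpoly c)) := by
  classical
  simp only [Mixed.dzbar, cpoly, Finsupp.sum, map_sum, pderiv_monomial, eval_monomial]
  refine Finset.sum_congr rfl fun p _ => ?_
  rw [Finsupp.prod_fintype _ _ (by simp), Fintype.prod_sum_type]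
  simp [cpt, expo, mul_assoc, Finsupp.single_apply, eq_comm]

theorem hasFDerivAt_mixed {n : ℕ} (c : MixedCoeff n) (z : Fin n → ℂ) :
    ∃ L : (Fin n → ℂ) →L[ℝ] ℂ, HasFDerivAt (Mixed.eval c) L z ∧
      ∀ u, L u = ∑ i, (Mixed.dz c i z * u i + Mixed.dzbar c i z * (starRingEnd ℂ) (u i)) := by
  have h1 : HasFDerivAt (𝕜 := ℝ) (cpt (n := n)) (ContinuousLinearMap.pi (Sum.elim
      (fun i => ContinuousLinearMap.proj (R := ℝ) (φ := fun _ : Fin n => ℂ) i)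
      (fun i => (Complex.conjCLE : ℂ →L[ℝ] ℂ).comp
        (ContinuousLinearMap.proj (R := ℝ) (φ := fun _ : Fin n => ℂ) i)))) z := by
    rw [hasFDerivAt_pi']
    rintro (i | i)
    · exact (ContinuousLinearMap.proj (R := ℝ) (φ := fun _ : Fin n => ℂ) i).hasFDerivAt
    · exact ((Complex.conjCLE : ℂ →L[ℝ] ℂ).comp
        (ContinuousLinearMap.proj (R := ℝ) (φ := fun _ : Fin n => ℂ) i)).hasFDerivAt
  have h2 := ((hasStrictFDerivAt_eval (cpoly c) (cpt z)).hasFDerivAt.restrictScalars ℝ).comp z h1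
  refine ⟨_, h2.congr_of_eventuallyEq (Eventually.of_forall fun w => eval_cpoly c w), fun u => ?_⟩
  simp [Finset.sum_add_distrib, dz_cpoly, dzbar_cpoly]

theorem vg_eq {n : ℕ} (c : MixedCoeff n) (vg : (Fin n → ℂ) → (Fin n → ℂ))
    (hg : ∀ (x u : Fin n → ℂ), fderiv ℝ (fun w => (Mixed.eval c w).re) x u
        = (∑ i, u i * (starRingEnd ℂ) (vg x i)).re) (z : Fin n → ℂ) (i : Fin n) :
    vg z i = (starRingEnd ℂ) (Mixed.dz c i z) + Mixed.dzbar c i z := by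
  obtain ⟨L, hL, hLu⟩ := hasFDerivAt_mixed c z
  have h1 : HasFDerivAt (fun w => (Mixed.eval c w).re) (Complex.reCLM.comp L) z :=
    Complex.reCLM.hasFDerivAt.comp z hL
  have key : ∀ t : ℂ, (t * (starRingEnd ℂ) (vg z i)).re =
      (Mixed.dz c i z * t + Mixed.dzbar c i z * (starRingEnd ℂ) t).re := by
    intro t
    have := hg z (Pi.single i t)
    rw [h1.fderiv] at this
    simp only [ContinuousLinearMap.comp_apply, hLu, Complex.reCLM_apply] at this
    rw [Finset.sum_eq_single i (by intro j _ hj; simp [hj]) (by simp),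
      Finset.sum_eq_single i (by intro j _ hj; simp [hj]) (by simp)] at this
    simpa using this.symm
  have k1 := key 1
  have k2 := key Complex.I
  apply Complex.ext
  · simpa using k1
  · simp at k2 ⊢; linarith

theorem vh_eq {n : ℕ} (c : MixedCoeff n) (vh : (Fin n → ℂ) → (Fin n → ℂ))
    (hh : ∀ (x u : Fin n → ℂ), fderiv ℝ (fun w => (Mixed.eval c w).im) x u
        = (∑ i, u i * (starRingEnd ℂ) (vh x i)).re) (z : Fin n → ℂ) (i : Fin n) :
    vh z i = Complex.I * ((starRingEnd ℂ) (Mixed.dz c i z) - Mixed.dzbar c i z) := by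
  obtain ⟨L, hL, hLu⟩ := hasFDerivAt_mixed c z
  have h1 : HasFDerivAt (fun w => (Mixed.eval c w).im) (Complex.imCLM.comp L) z :=
    Complex.imCLM.hasFDerivAt.comp z hL
  have key : ∀ t : ℂ, (t * (starRingEnd ℂ) (vh z i)).re =
      (Mixed.dz c i z * t + Mixed.dzbar c i z * (starRingEnd ℂ) t).im := by
    intro t
    have := hh z (Pi.single i t)
    rw [h1.fderiv] at this
    simp only [ContinuousLinearMap.comp_apply, hLu, Complex.imCLM_apply] at this
    rw [Finset.sum_eq_single i (by intro j _ hj; simp [hj]) (by simp),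
      Finset.sum_eq_single i (by intro j _ hj; simp [hj]) (by simp)] at this
    simpa using this.symm
  have k1 := key 1
  have k2 := key Complex.I
  apply Complex.ext
  · simp at k1 ⊢; linarith
  · simp at k2 ⊢; linarith

/-- real coordinates -/
def rpt {n : ℕ} (z : Fin n → ℂ) : Fin n ⊕ Fin n → ℝ :=
  Sum.elim (fun i => (z i).re) (fun i => (z i).im)

/-- maps whose real and imaginary parts are real polynomials -/
def IsMP {n : ℕ} (φ : (Fin n → ℂ) → ℂ) : Prop :=
  ∃ G H : MvPolynomial (Fin n ⊕ Fin n) ℝ, ∀ z, (φ z).re = MvPolynomial.eval (rpt z) G ∧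
    (φ z).im = MvPolynomial.eval (rpt z) H

theorem IsMP.const {n : ℕ} (a : ℂ) : IsMP (fun _ : Fin n → ℂ => a) :=
  ⟨C a.re, C a.im, fun z => by simp⟩

theorem IsMP.add {n : ℕ} {φ ψ : (Fin n → ℂ) → ℂ} (h1 : IsMP φ) (h2 : IsMP ψ) :
    IsMP (fun z => φ z + ψ z) := by
  obtain ⟨G, H, h⟩ := h1
  obtain ⟨G', H', h'⟩ := h2
  exact ⟨G + G', H + H', fun z => by simp [(h z).1, (h z).2, (h' z).1, (h' z).2]⟩

theorem IsMP.mul {n : ℕ} {φ ψ : (Fin n → ℂ) → ℂ} (h1 : IsMP φ) (h2 : IsMP ψ) :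
    IsMP (fun z => φ z * ψ z) := by
  obtain ⟨G, H, h⟩ := h1
  obtain ⟨G', H', h'⟩ := h2
  exact ⟨G * G' - H * H', G * H' + H * G',
    fun z => by simp [(h z).1, (h z).2, (h' z).1, (h' z).2]⟩

theorem isMP_cpt {n : ℕ} (j : Fin n ⊕ Fin n) : IsMP (fun z : Fin n → ℂ => cpt z j) := by
  rcases j with i | i
  · exact ⟨X (Sum.inl i), X (Sum.inr i), fun z => by simp [cpt, rpt]⟩
  · exact ⟨X (Sum.inl i), - X (Sum.inr i), fun z => by simp [cpt, rpt]⟩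

theorem isMP_eval {n : ℕ} (c : MixedCoeff n) : IsMP (Mixed.eval c) := by
  have : ∀ P : MvPolynomial (Fin n ⊕ Fin n) ℂ,
      IsMP (fun z : Fin n → ℂ => MvPolynomial.eval (cpt z) P) := by
    intro P
    induction P using MvPolynomial.induction_on with
    | C a => simpa using IsMP.const a
    | add p q hp hq => simpa using hp.add hq
    | mul_X p i hp => simpa using hp.mul (isMP_cpt i)
  have h := this (cpoly c)
  have e : Mixed.eval c = fun z : Fin n → ℂ => MvPolynomial.eval (cpt z) (cpoly c) := by
    funext z; exact eval_cpoly c z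
  rw [e]; exact h

theorem pderiv_eq {n : ℕ} (φ : (Fin n → ℂ) → ℝ) (v : (Fin n → ℂ) → (Fin n → ℂ))
    (hg : ∀ (x u : Fin n → ℂ), fderiv ℝ φ x u = (∑ i, u i * (starRingEnd ℂ) (v x i)).re)
    (G : MvPolynomial (Fin n ⊕ Fin n) ℝ) (hG : ∀ z, φ z = MvPolynomial.eval (rpt z) G)
    (z : Fin n → ℂ) (j : Fin n ⊕ Fin n) :
    MvPolynomial.eval (rpt z) (pderiv j G) = rpt (v z) j := by
  have h1 : HasFDerivAt (𝕜 := ℝ) (rpt (n := n)) (ContinuousLinearMap.pi (Sum.elim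
      (fun i => Complex.reCLM.comp (ContinuousLinearMap.proj (R := ℝ) (φ := fun _ : Fin n => ℂ) i))
      (fun i => Complex.imCLM.comp
        (ContinuousLinearMap.proj (R := ℝ) (φ := fun _ : Fin n => ℂ) i)))) z := by
    rw [hasFDerivAt_pi']
    rintro (i | i)
    · exact (Complex.reCLM.comp
        (ContinuousLinearMap.proj (R := ℝ) (φ := fun _ : Fin n => ℂ) i)).hasFDerivAt
    · exact (Complex.imCLM.comp
        (ContinuousLinearMap.proj (R := ℝ) (φ := fun _ : Fin n => ℂ) i)).hasFDerivAt
  have h2 := (hasStrictFDerivAt_eval G (rpt z)).hasFDerivAt.comp z h1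
  have h3 := (h2.congr_of_eventuallyEq (f₁ := φ) (Eventually.of_forall fun w => hG w)).fderiv
  rcases j with i | i
  · have := hg z (Pi.single i 1)
    rw [h3, Finset.sum_eq_single i (by intro j _ hj; simp [hj]) (by simp)] at this
    simp [Pi.single_apply, apply_ite] at this
    simpa [rpt] using this
  · have := hg z (Pi.single i Complex.I)
    rw [h3, Finset.sum_eq_single i (by intro j _ hj; simp [hj]) (by simp)] at this
    simp [Pi.single_apply, apply_ite] at this
    simpa [rpt] using this

theorem norm2_sq {n : ℕ} (z : Fin n → ℂ) : Mixed.norm2 z ^ 2 = ∑ j, rpt z j ^ 2 := by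
  rw [Mixed.norm2, Real.sq_sqrt (Finset.sum_nonneg fun i _ => Complex.normSq_nonneg _),
    Fintype.sum_sum_type, ← Finset.sum_add_distrib]
  refine Finset.sum_congr rfl fun i _ => ?_
  simp [rpt, Complex.normSq_apply]; ring

theorem norm_le_norm2 {n : ℕ} (z : Fin n → ℂ) : ‖z‖ ≤ Mixed.norm2 z := by
  unfold Mixed.norm2
  rw [pi_norm_le_iff_of_nonneg (Real.sqrt_nonneg _)]
  intro i
  apply Real.le_sqrt_of_sq_le
  rw [← Complex.normSq_eq_norm_sq]
  exact Finset.single_le_sum (f := fun i => Complex.normSq (z i))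
    (fun i _ => Complex.normSq_nonneg _) (Finset.mem_univ i)

theorem norm2_smul {n : ℕ} (l : ℝ) (z : Fin n → ℂ) :
    Mixed.norm2 (fun i => (l : ℂ) * z i) = |l| * Mixed.norm2 z := by
  rw [Mixed.norm2, Mixed.norm2, ← Real.sqrt_sq_eq_abs, ← Real.sqrt_mul (sq_nonneg _),
    Finset.mul_sum]
  congr 1
  refine Finset.sum_congr rfl fun i _ => ?_
  rw [Complex.normSq_mul, Complex.normSq_ofReal]; ring

theorem small_seq {n : ℕ} (G H : MvPolynomial (Fin n ⊕ Fin n) ℝ) (z : ℕ → Fin n → ℂ)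
    (l a b : ℕ → ℝ) (hab : ∀ k, a k ^ 2 + b k ^ 2 = 1)
    (hlin : ∀ k j, a k * MvPolynomial.eval (rpt (z k)) (pderiv j G) +
      b k * MvPolynomial.eval (rpt (z k)) (pderiv j H) = l k * rpt (z k) j)
    (M : ℝ) (hG : ∀ k, |MvPolynomial.eval (rpt (z k)) G| ≤ M)
    (hH : ∀ k, |MvPolynomial.eval (rpt (z k)) H| ≤ M)
    (hinf : Tendsto (fun k => Mixed.norm2 (z k)) atTop atTop) (ε : ℝ) (hε : 0 < ε) :
    ∃ k, (l k * Mixed.norm2 (z k) ^ 2) ^ 2 < ε := by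
  let x : Fin n ⊕ Fin n → Hyperreal := fun j => ofSeq (fun k => rpt (z k) j)
  have hx : ∀ Q : MvPolynomial (Fin n ⊕ Fin n) ℝ,
      aeval x Q = ofSeq (fun k => MvPolynomial.eval (rpt (z k)) Q) :=
    fun Q => aeval_ofSeq (fun j k => rpt (z k) j) Q
  let r : Hyperreal := ofSeq (fun k => Mixed.norm2 (z k))
  have hr : ∀ R : ℝ, (R : Hyperreal) < r := by
    intro R
    rw [coe_eq_ofSeq, ofSeq_lt_ofSeq]
    exact Nat.hyperfilter_le_atTop (hinf.eventually_gt_atTop R)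
  have habs : ∀ (u : ℕ → ℝ), (∀ k, |u k| ≤ M) → |ofSeq u| ≤ (M : Hyperreal) := by
    intro u hu
    rw [abs_le]
    constructor
    · exact ofSeq_le_ofSeq.2 (Eventually.of_forall fun k => (abs_le.1 (hu k)).1)
    · exact ofSeq_le_ofSeq.2 (Eventually.of_forall fun k => (abs_le.1 (hu k)).2)
  have hr2 : r ^ 2 = ∑ j, x j ^ 2 := by
    have h1 : ∑ j, x j ^ 2 = aeval x (∑ j, X j ^ 2 : MvPolynomial (Fin n ⊕ Fin n) ℝ) := by simp
    rw [h1, hx]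
    have h2 : r ^ 2 = ofSeq (fun k => Mixed.norm2 (z k) ^ 2) := rfl
    rw [h2]
    congr 1
    funext k
    rw [norm2_sq]; simp
  have hkey := key r (aeval x G) (aeval x H) (ofSeq a) (ofSeq b) (ofSeq l) hr M
    (by rw [hx]; exact habs _ hG) (by rw [hx]; exact habs _ hH)
    (ofSeq_eq_ofSeq.2 (Eventually.of_forall fun k => hab k))
    (by
      intro D
      rw [derivation_aeval, derivation_aeval, Finset.mul_sum, Finset.mul_sum,
        ← Finset.sum_add_distrib]
      have h1 : ∀ j, ofSeq a * aeval x (pderiv j G) + ofSeq b * aeval x (pderiv j H)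
          = ofSeq l * x j := by
        intro j
        rw [hx, hx]
        exact ofSeq_eq_ofSeq.2 (Eventually.of_forall fun k => hlin k j)
      have h2 : r * D r = ∑ j, x j * D (x j) := by
        have := congrArg D hr2
        simp only [map_sum, Derivation.leibniz_pow, smul_eq_mul, nsmul_eq_mul] at this
        simp only [Nat.add_one_sub_one, pow_one, ← Finset.mul_sum] at this
        exact mul_left_cancel₀ (by norm_num) this
      rw [mul_assoc, h2, Finset.mul_sum]
      refine Finset.sum_congr rfl fun j _ => ?_
      rw [← mul_assoc, ← h1]; ring) ε hε
  have : ∀ᶠ k in hyperfilter ℕ, (l k * Mixed.norm2 (z k) ^ 2) ^ 2 < ε := ofSeq_lt_ofSeq.1 hkey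
  exact this.exists

theorem milnor_normal {n : ℕ} (c : MixedCoeff n) (vg vh : (Fin n → ℂ) → (Fin n → ℂ))
    (hg : ∀ (x u : Fin n → ℂ), fderiv ℝ (fun w => (Mixed.eval c w).re) x u
        = (∑ i, u i * (starRingEnd ℂ) (vg x i)).re)
    (hh : ∀ (x u : Fin n → ℂ), fderiv ℝ (fun w => (Mixed.eval c w).im) x u
        = (∑ i, u i * (starRingEnd ℂ) (vh x i)).re)
    (z : Fin n → ℂ) (hz : z ∈ Mixed.Milnor c) :
    ∃ l a b : ℝ, a ^ 2 + b ^ 2 = 1 ∧ ∀ i, (a : ℂ) * vg z i + (b : ℂ) * vh z i = (l : ℂ) * z i := by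
  obtain ⟨l, m, hm, h⟩ := hz
  have hm0 : (‖m‖ : ℂ) ≠ 0 := by exact_mod_cast (norm_pos_iff.2 hm).ne'
  have hmr : ‖m‖ ≠ 0 := (norm_pos_iff.2 hm).ne'
  refine ⟨l / ‖m‖, m.re / ‖m‖, m.im / ‖m‖, ?_, fun i => ?_⟩
  · have := Complex.sq_norm m
    rw [Complex.normSq_apply] at this
    field_simp
    linarith
  · rw [vg_eq c vg hg, vh_eq c vh hh]
    push_cast
    have e : (l : ℂ) / ‖m‖ * z i = ((l : ℂ) * z i) / ‖m‖ := by ring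
    rw [e, h i]
    have hm1 : (starRingEnd ℂ) m = m.re - m.im * Complex.I := by
      apply Complex.ext <;> simp
    have hm2 : m = m.re + m.im * Complex.I := (Complex.re_add_im m).symm
    rw [hm1]
    field_simp
    linear_combination (-((starRingEnd ℂ) (Mixed.dz c i z))) * hm2

end MixedAux

/-- `S(f) ⊆ K_∞(f)`, the set of asymptotic critical values in the sense of
Kurdyka–Orro–Simon, where `ν(x) = inf_{a²+b²=1} ‖a∇g(x) + b∇h(x)‖`. -/
theorem Sset_subset_Kinfty {n : ℕ} (c : MixedCoeff n) (vg vh : (Fin n → ℂ) → (Fin n → ℂ))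
    (hg : ∀ (x u : Fin n → ℂ), fderiv ℝ (fun w => (Mixed.eval c w).re) x u
        = (∑ i, u i * (starRingEnd ℂ) (vg x i)).re)
    (hh : ∀ (x u : Fin n → ℂ), fderiv ℝ (fun w => (Mixed.eval c w).im) x u
        = (∑ i, u i * (starRingEnd ℂ) (vh x i)).re) :
    Mixed.Sset c ⊆ {y : ℂ | ∃ x : ℕ → (Fin n → ℂ),
      Filter.Tendsto (fun l => ‖x l‖) Filter.atTop Filter.atTop ∧
      Filter.Tendsto (fun l => Mixed.eval c (x l)) Filter.atTop (nhds y) ∧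
      Filter.Tendsto (fun l => (1 + ‖x l‖) *
          sInf {r : ℝ | ∃ a b : ℝ, a ^ 2 + b ^ 2 = 1 ∧
            r = Mixed.norm2 (fun k => (a : ℂ) * vg (x l) k + (b : ℂ) * vh (x l) k)})
        Filter.atTop (nhds 0)} := by
  rintro y ⟨z, hz, hzinf, hzy⟩
  refine ⟨z, hzinf, hzy, ?_⟩
  choose l a b hab hlin using fun k => MixedAux.milnor_normal c vg vh hg hh (z k) (hz k)
  obtain ⟨G, H, hGH⟩ := MixedAux.isMP_eval c
  have hrinf : Tendsto (fun k => Mixed.norm2 (z k)) atTop atTop :=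
    tendsto_atTop_mono (fun k => MixedAux.norm_le_norm2 (z k)) hzinf
  obtain ⟨M, hM⟩ := (Metric.isBounded_range_of_tendsto _ hzy).exists_norm_le
  have hMk : ∀ k, ‖Mixed.eval c (z k)‖ ≤ M := fun k => hM _ ⟨k, rfl⟩
  have hlim : Tendsto (fun k => l k * Mixed.norm2 (z k) ^ 2) atTop (nhds 0) := by
    by_contra hcon
    rw [Metric.tendsto_atTop] at hcon
    push Not at hcon
    obtain ⟨ε, hε, hfr⟩ := hcon
    obtain ⟨φ, hφ, hφε⟩ := Filter.extraction_of_frequently_atTop (Filter.frequently_atTop.2 hfr)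
    obtain ⟨k, hk⟩ := MixedAux.small_seq G H (fun k => z (φ k)) (fun k => l (φ k))
      (fun k => a (φ k)) (fun k => b (φ k)) (fun k => hab _) (by
        intro k j
        have e1 := MixedAux.pderiv_eq (fun w => (Mixed.eval c w).re) vg hg G
          (fun w => (hGH w).1) (z (φ k)) j
        have e2 := MixedAux.pderiv_eq (fun w => (Mixed.eval c w).im) vh hh H
          (fun w => (hGH w).2) (z (φ k)) j
        simp only [e1, e2]
        rcases j with i | i
        · have := congrArg Complex.re (hlin (φ k) i)
          simpa [MixedAux.rpt] using this
        · have := congrArg Complex.im (hlin (φ k) i)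
          simpa [MixedAux.rpt] using this) M
      (fun k => by rw [← (hGH _).1]; exact (Complex.abs_re_le_norm _).trans (hMk _))
      (fun k => by rw [← (hGH _).2]; exact (Complex.abs_im_le_norm _).trans (hMk _))
      (hrinf.comp hφ.tendsto_atTop) (ε ^ 2) (by positivity)
    have h1 := hφε k
    rw [Real.dist_eq, sub_zero] at h1
    rw [← sq_abs] at hk
    exact absurd hk (not_lt.2 (pow_le_pow_left₀ hε.le h1 2))
  have hlim2 : Tendsto (fun k => 2 * |l k * Mixed.norm2 (z k) ^ 2|) atTop (nhds 0) := by
    simpa using hlim.abs.const_mul 2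
  refine squeeze_zero' (Eventually.of_forall fun k => ?_) ?_ hlim2
  · refine mul_nonneg (by positivity) (Real.sInf_nonneg ?_)
    rintro r ⟨a, b, -, rfl⟩
    exact Real.sqrt_nonneg _
  · filter_upwards [hrinf.eventually_ge_atTop 1] with k hk
    have hs : sInf {r : ℝ | ∃ a b : ℝ, a ^ 2 + b ^ 2 = 1 ∧
            r = Mixed.norm2 (fun i => (a : ℂ) * vg (z k) i + (b : ℂ) * vh (z k) i)}
          ≤ |l k| * Mixed.norm2 (z k) := by
      refine csInf_le ⟨0, ?_⟩ ⟨a k, b k, hab k, ?_⟩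
      · rintro r ⟨a, b, -, rfl⟩
        exact Real.sqrt_nonneg _
      · simp only [hlin]
        rw [MixedAux.norm2_smul]
    have h1 : 1 + ‖z k‖ ≤ 2 * Mixed.norm2 (z k) := by
      linarith [MixedAux.norm_le_norm2 (z k)]
    have h0 : 0 ≤ |l k| * Mixed.norm2 (z k) := mul_nonneg (abs_nonneg _) (by linarith)
    calc _ ≤ (1 + ‖z k‖) * (|l k| * Mixed.norm2 (z k)) :=
          mul_le_mul_of_nonneg_left hs (by positivity)
      _ ≤ (2 * Mixed.norm2 (z k)) * (|l k| * Mixed.norm2 (z k)) :=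
          mul_le_mul_of_nonneg_right h1 h0
      _ = 2 * |l k * Mixed.norm2 (z k) ^ 2| := by
          rw [abs_mul, abs_of_nonneg (sq_nonneg (Mixed.norm2 (z k)))]; ring
end
end

section
/- (Fibration Theorem.) Let f : ℂⁿ → ℂ be a mixed polynomial and set B := f(Sing f) ∪ S(f). Then the restriction f : ℂⁿ \ f⁻¹(B) → ℂ \ B is a locally trivial C^∞ fibration; that is, for every c ∈ ℂ \ B there exist an open neighbourhood U of c with U ⊆ ℂ \ B and maps Φ : ℂⁿ → ℂ × ℂⁿ and Ψ : ℂ × ℂⁿ → ℂⁿ such that: Φ restricts to a bijection from f⁻¹(U) onto U × f⁻¹({c}) with inverse given by the restriction of Ψ; Φ is C^∞ (over ℝ) on the open set f⁻¹(U); Ψ is C^∞ (over ℝ, in the sense of ContDiffOn) on U × f⁻¹({c}); and the first component of Φ(x) equals f(x) for all x ∈ f⁻¹(U). -/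
open Complex Filter Finset

noncomputable section

namespace FibAux
open Set Topology MeasureTheory

section Omega
universe u
variable {K : Type u} [TopologicalSpace K] [CompactSpace K]

/-- Pointwise application as a continuous bilinear map on spaces of continuous maps. -/
def pw (K : Type u) [TopologicalSpace K] [CompactSpace K]
    (E F : Type u) [NormedAddCommGroup E] [NormedSpace ℝ E] [NormedAddCommGroup F]
    [NormedSpace ℝ F] : C(K, E →L[ℝ] F) →L[ℝ] (C(K, E) →L[ℝ] C(K, F)) :=
  LinearMap.mkContinuous₂
    (LinearMap.mk₂ ℝ (fun (a : C(K, E →L[ℝ] F)) (h : C(K, E)) =>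
      (⟨fun t => a t (h t), a.continuous.clm_apply h.continuous⟩ : C(K, F)))
      (by intros; ext; simp) (by intros; ext; simp) (by intros; ext; simp) (by intros; ext; simp))
    1 (by
      intro a h
      rw [ContinuousMap.norm_le _ (by positivity)]
      intro t
      simp only [LinearMap.mk₂_apply, ContinuousMap.coe_mk, one_mul]
      exact (ContinuousLinearMap.le_opNorm _ _).trans
        (mul_le_mul (a.norm_coe_le_norm t) (h.norm_coe_le_norm t) (norm_nonneg _)
          ((norm_nonneg _).trans (a.norm_coe_le_norm t))))

@[simp] lemma pw_apply {E F : Type u} [NormedAddCommGroup E] [NormedSpace ℝ E]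
    [NormedAddCommGroup F] [NormedSpace ℝ F] (a : C(K, E →L[ℝ] F)) (h : C(K, E)) (t : K) :
    pw K E F a h t = a t (h t) := rfl

/-- The composition operator. -/
def cmp (K : Type u) [TopologicalSpace K] {E F : Type u} [NormedAddCommGroup E]
    [NormedAddCommGroup F] (g : E → F) (hg : Continuous g) (u : C(K, E)) : C(K, F) :=
  ⟨fun t => g (u t), hg.comp u.continuous⟩

lemma cmp_hasFDerivAt {E F : Type u} [NormedAddCommGroup E] [NormedSpace ℝ E]
    [NormedAddCommGroup F] [NormedSpace ℝ F] (g : E → F) (hg : ContDiff ℝ 1 g)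
    (u : C(K, E)) :
    HasFDerivAt (cmp K g hg.continuous)
      (pw K E F (cmp K (fderiv ℝ g) (hg.continuous_fderiv (by norm_num)) u)) u := by
  rw [hasFDerivAt_iff_isLittleO_nhds_zero, Asymptotics.isLittleO_iff]
  intro ε hε
  have hc : IsCompact (Set.range u) := isCompact_range u.continuous
  have := hc.uniformContinuousAt_of_continuousAt (fderiv ℝ g)
    (fun a _ => (hg.continuous_fderiv (by norm_num)).continuousAt) (Metric.dist_mem_uniformity hε)
  rw [Metric.mem_uniformity_dist] at this
  obtain ⟨δ, hδ, H⟩ := this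
  filter_upwards [Metric.ball_mem_nhds (0 : C(K, E)) hδ] with h hh
  rw [mem_ball_zero_iff] at hh
  rw [ContinuousMap.norm_le _ (by positivity)]
  intro t
  have key := (convex_ball (u t) δ).norm_image_sub_le_of_norm_fderiv_le' (𝕜 := ℝ) (f := g)
    (φ := fderiv ℝ g (u t)) (C := ε) (x := u t) (y := u t + h t)
    (fun x _ => (hg.differentiable (by norm_num)) x) (by
      intro x hx
      have := @H (u t) x (by rw [dist_comm]; exact hx) ⟨t, rfl⟩
      simp only [Set.mem_ofPred_eq] at this
      rw [← dist_eq_norm, dist_comm]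
      exact this.le) (Metric.mem_ball_self hδ) (by
      rw [Metric.mem_ball, dist_eq_norm, add_sub_cancel_left]
      exact (h.norm_coe_le_norm t).trans_lt hh)
  rw [add_sub_cancel_left] at key
  exact key.trans (mul_le_mul_of_nonneg_left (h.norm_coe_le_norm t) hε.le)

lemma cmp_contDiff_nat (n : ℕ) : ∀ {E F : Type u} [NormedAddCommGroup E] [NormedSpace ℝ E]
    [NormedAddCommGroup F] [NormedSpace ℝ F] (g : E → F) (hg : ContDiff ℝ ((n : ℕ∞) : WithTop ℕ∞) g),
    ContDiff ℝ ((n : ℕ∞) : WithTop ℕ∞) (cmp K g hg.continuous) := by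
  induction n with
  | zero =>
    intro E F _ _ _ _ g hg
    simp only [Nat.cast_zero, WithTop.coe_zero, contDiff_zero]
    exact ContinuousMap.continuous_postcomp (⟨g, hg.continuous⟩ : C(E, F))
  | succ n ih =>
    intro E F _ _ _ _ g hg
    have hg1 : ContDiff ℝ 1 g := hg.of_le (by exact_mod_cast Nat.le_add_left 1 n)
    have hg' : ContDiff ℝ ((n : ℕ∞) : WithTop ℕ∞) (fderiv ℝ g) :=
      hg.fderiv_right (by push_cast; exact le_rfl)
    have h2 := ih (fderiv ℝ g) hg'
    have h3 := (pw K E F).contDiff.comp h2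
    exact contDiff_succ_iff_hasFDerivAt.2 ⟨_, h3, fun u => cmp_hasFDerivAt g hg1 u⟩

lemma cmp_contDiff {E F : Type u} [NormedAddCommGroup E] [NormedSpace ℝ E]
    [NormedAddCommGroup F] [NormedSpace ℝ F] (g : E → F) (hg : ContDiff ℝ (⊤ : ℕ∞) g) :
    ContDiff ℝ (⊤ : ℕ∞) (cmp K g hg.continuous) := by
  rw [contDiff_infty]
  intro n
  exact cmp_contDiff_nat n g (hg.of_le (by exact_mod_cast le_top))

end Omega

end FibAux

namespace FibAux
open Set Topology MeasureTheory

set_option linter.unusedSectionVars false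
section Volterra
variable {G : Type} [NormedAddCommGroup G] [NormedSpace ℝ G] [CompleteSpace G]

abbrev I01 : Type := Set.Icc (0 : ℝ) 1

/-- extension of a continuous path to the real line -/
def ext (u : C(I01, G)) : ℝ → G := Set.IccExtend (zero_le_one' ℝ) u

lemma ext_cont (u : C(I01, G)) : Continuous (ext u) := u.continuous.Icc_extend'

lemma ext_coe (u : C(I01, G)) (t : I01) : ext u t = u t := Set.IccExtend_val _ _ t

lemma ext_norm_le (u : C(I01, G)) (t : ℝ) : ‖ext u t‖ ≤ ‖u‖ := u.norm_coe_le_norm _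

/-- The integration operator. -/
def J (G : Type) [NormedAddCommGroup G] [NormedSpace ℝ G] [CompleteSpace G] :
    C(I01, G) →L[ℝ] C(I01, G) :=
  LinearMap.mkContinuous
    { toFun := fun u => ⟨fun t => ∫ s in (0 : ℝ)..t, ext u s,
        (intervalIntegral.continuous_primitive
          (fun a b => (ext_cont u).intervalIntegrable a b) 0).comp continuous_subtype_val⟩
      map_add' := by
        intro u w
        ext t
        simp only [ContinuousMap.coe_mk, ContinuousMap.add_apply]
        rw [← intervalIntegral.integral_add ((ext_cont u).intervalIntegrable _ _)
          ((ext_cont w).intervalIntegrable _ _)]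
        rfl
      map_smul' := by
        intro r u
        ext t
        simp only [ContinuousMap.coe_mk, ContinuousMap.smul_apply, RingHom.id_apply]
        rw [← intervalIntegral.integral_smul]
        rfl } 1 (by
      intro u
      rw [ContinuousMap.norm_le _ (by positivity)]
      intro t
      have := intervalIntegral.norm_integral_le_of_norm_le_const (a := (0 : ℝ)) (b := t)
        (f := ext u) (C := ‖u‖) (fun s _ => ext_norm_le u s)
      refine this.trans ?_
      rw [sub_zero, abs_of_nonneg t.2.1, one_mul]
      exact mul_le_of_le_one_right (norm_nonneg _) t.2.2)

lemma J_apply (u : C(I01, G)) (t : I01) : J G u t = ∫ s in (0 : ℝ)..t, ext u s := rfl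

lemma volterra_pow (a : C(I01, G →L[ℝ] G)) (k : ℕ) (h : C(I01, G)) (t : I01) :
    ‖(((J G) ∘L (pw I01 G G a)) ^ k) h t‖ ≤ (‖a‖ * t) ^ k / k.factorial * ‖h‖ := by
  induction k generalizing t with
  | zero => simpa using h.norm_coe_le_norm t
  | succ k ih =>
    rw [pow_succ', mul_apply_eq_comp, ContinuousLinearMap.comp_apply, J_apply]
    set w := (((J G) ∘L (pw I01 G G a)) ^ k) h with hw
    have hb : ∀ s ∈ Set.Icc (0 : ℝ) t, ‖ext (pw I01 G G a w) s‖ ≤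
        ‖a‖ * ((‖a‖ * s) ^ k / k.factorial * ‖h‖) := by
      intro s hs
      have h1 : ext (pw I01 G G a w) s = pw I01 G G a w ⟨s, hs.1, hs.2.trans t.2.2⟩ :=
        ext_coe _ ⟨s, hs.1, hs.2.trans t.2.2⟩
      rw [h1, pw_apply]
      refine (ContinuousLinearMap.le_opNorm _ _).trans ?_
      exact mul_le_mul (a.norm_coe_le_norm _) (ih ⟨s, hs.1, hs.2.trans t.2.2⟩) (norm_nonneg _)
        ((norm_nonneg _).trans (a.norm_coe_le_norm t))
    have h2 := intervalIntegral.norm_integral_le_of_norm_le (a := (0 : ℝ)) (b := t) (μ := volume)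
      (f := ext (pw I01 G G a w)) (g := fun s => ‖a‖ * ((‖a‖ * s) ^ k / k.factorial * ‖h‖)) t.2.1
      (Filter.Eventually.of_forall fun s hs => hb s ⟨hs.1.le, hs.2⟩)
      (Continuous.intervalIntegrable (by fun_prop) _ _)
    refine h2.trans (le_of_eq ?_)
    have h3 : (fun s : ℝ => ‖a‖ * ((‖a‖ * s) ^ k / k.factorial * ‖h‖)) =
        fun s : ℝ => (‖a‖ ^ (k + 1) / k.factorial * ‖h‖) * s ^ k := by
      funext s; rw [mul_pow]; ring
    rw [h3, intervalIntegral.integral_const_mul, integral_pow]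
    rw [Nat.factorial_succ, mul_pow]
    push_cast
    have : (k.factorial : ℝ) ≠ 0 := by positivity
    have : (k : ℝ) + 1 ≠ 0 := by positivity
    field_simp
    simp

lemma volterra_isUnit (a : C(I01, G →L[ℝ] G)) :
    IsUnit (1 - (J G) ∘L (pw I01 G G a) : C(I01, G) →L[ℝ] C(I01, G)) := by
  set T := (J G) ∘L (pw I01 G G a) with hT
  have hb : ∀ k : ℕ, ‖T ^ k‖ ≤ ‖a‖ ^ k / k.factorial := by
    intro k
    have ha : 0 ≤ ‖a‖ := (norm_nonneg _).trans (a.norm_coe_le_norm ⟨0, by simp⟩)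
    refine ContinuousLinearMap.opNorm_le_bound _ (by positivity) fun h => ?_
    rw [ContinuousMap.norm_le _ (by positivity)]
    intro t
    refine (volterra_pow a k h t).trans ?_
    have : ‖a‖ * t ≤ ‖a‖ := mul_le_of_le_one_right ha t.2.2
    have : 0 ≤ ‖a‖ * t := mul_nonneg ha t.2.1
    gcongr
  obtain ⟨k, hk⟩ := ((FloorSemiring.tendsto_pow_div_factorial_atTop ‖a‖).eventually
    (gt_mem_nhds one_pos)).exists
  have h1 : IsUnit (1 - T ^ k) := isUnit_one_sub_of_norm_lt_one
    (R := C(I01, G) →L[ℝ] C(I01, G)) ((hb k).trans_lt hk)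
  rw [← mul_neg_geom_sum] at h1
  have hc : Commute (1 - T) (∑ i ∈ Finset.range k, T ^ i) :=
    Commute.sum_right _ _ _ fun i _ => ((Commute.one_left T).sub_left (Commute.refl T)).pow_right i
  exact (hc.isUnit_mul_iff.1 h1).1

end Volterra

section Flow
variable {G : Type} [NormedAddCommGroup G] [NormedSpace ℝ G] [FiniteDimensional ℝ G]

/-- `u` solves the autonomous equation `du = V(u) dt` on `[0,1]`. -/
def Sol (V : G → G) (u : ℝ → G) : Prop :=
  ∀ t ∈ Set.Icc (0 : ℝ) 1, HasDerivWithinAt u (V (u t)) (Set.Icc 0 1) t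

lemma Sol.unique {V : G → G} (hV : ContDiff ℝ 1 V) {u w : ℝ → G} (hu : Sol V u) (hw : Sol V w)
    (h0 : u 0 = w 0) : Set.EqOn u w (Set.Icc 0 1) := by
  have hcu : ContinuousOn u (Set.Icc 0 1) := fun t ht => (hu t ht).continuousWithinAt
  have hcw : ContinuousOn w (Set.Icc 0 1) := fun t ht => (hw t ht).continuousWithinAt
  have hk : IsCompact (u '' Set.Icc 0 1 ∪ w '' Set.Icc 0 1) :=
    (isCompact_Icc.image_of_continuousOn hcu).union (isCompact_Icc.image_of_continuousOn hcw)
  obtain ⟨r, hr⟩ := hk.isBounded.subset_closedBall 0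
  obtain ⟨C, hC⟩ := (isCompact_closedBall (0 : G) r).exists_bound_of_continuousOn
    (hV.continuous_fderiv (by norm_num)).continuousOn
  have hlip : LipschitzOnWith (Real.toNNReal C) V (Metric.closedBall 0 r) :=
    (convex_closedBall (0 : G) r).lipschitzOnWith_of_nnnorm_fderiv_le (𝕜 := ℝ)
      (fun x _ => hV.differentiable (by norm_num) x) (fun x hx => by
        rw [← NNReal.coe_le_coe, coe_nnnorm]
        exact (hC x hx).trans (Real.le_coe_toNNReal C))
  have nh : ∀ t ∈ Set.Ico (0 : ℝ) 1, Set.Icc (0 : ℝ) 1 ∈ 𝓝[Set.Ici t] t := by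
    intro t ht
    exact Filter.mem_of_superset (Icc_mem_nhdsGE ht.2)
      (Set.Icc_subset_Icc_left ht.1)
  refine ODE_solution_unique_of_mem_Icc_right (v := fun _ => V) (K := Real.toNNReal C)
    (s := fun _ => Metric.closedBall 0 r) (fun _ _ => hlip) hcu ?_ ?_ hcw ?_ ?_ h0
  · exact fun t ht => (hu t ⟨ht.1, ht.2.le⟩).mono_of_mem_nhdsWithin (nh t ht)
  · exact fun t ht => hr (Or.inl ⟨t, ⟨ht.1, ht.2.le⟩, rfl⟩)
  · exact fun t ht => (hw t ⟨ht.1, ht.2.le⟩).mono_of_mem_nhdsWithin (nh t ht)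
  · exact fun t ht => hr (Or.inr ⟨t, ⟨ht.1, ht.2.le⟩, rfl⟩)

lemma sol_of_eq {V : G → G} (hV : Continuous V) (u : C(I01, G)) (x : G)
    (h : u - J G (cmp I01 V hV u) = ContinuousMap.const _ x) :
    Sol V (ext u) ∧ ext u 0 = x := by
  have h' : ∀ t : I01, u t = x + ∫ s in (0 : ℝ)..t, V (ext u s) := by
    intro t
    have := congrArg (fun w : C(I01, G) => w t) h
    simp only [ContinuousMap.sub_apply, ContinuousMap.const_apply] at this
    rw [← sub_eq_iff_eq_add]
    rw [← this]; rfl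
  have hc : Continuous fun s => V (ext u s) := hV.comp (ext_cont u)
  constructor
  · intro t ht
    have hd : HasDerivAt (fun t : ℝ => x + ∫ s in (0 : ℝ)..t, V (ext u s)) (V (ext u t)) t :=
      (intervalIntegral.integral_hasDerivAt_right (hc.intervalIntegrable _ _)
        (hc.stronglyMeasurableAtFilter _ _) hc.continuousAt).const_add x
    refine hd.hasDerivWithinAt.congr_of_mem (fun s hs => ?_) ht
    have := ext_coe u ⟨s, hs⟩
    simp only at this
    rw [this, h']
  · have := ext_coe u ⟨0, by simp⟩
    simp only at this
    rw [this, h']; simp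

lemma eq_of_sol {V : G → G} (hV : Continuous V) (u : C(I01, G)) (w : ℝ → G)
    (hu : ∀ t : I01, u t = w t) (h : Sol V w) :
    u - J G (cmp I01 V hV u) = ContinuousMap.const _ (w 0) := by
  ext t
  simp only [ContinuousMap.sub_apply, ContinuousMap.const_apply, J_apply]
  have hcw : ContinuousOn w (Set.Icc 0 1) := fun t ht => (h t ht).continuousWithinAt
  have hsub : Set.Icc (0 : ℝ) t ⊆ Set.Icc 0 1 := Set.Icc_subset_Icc_right t.2.2
  have hI := intervalIntegral.integral_eq_sub_of_hasDerivAt_of_le (a := (0 : ℝ)) (b := t)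
    (f := w) (f' := fun s => ext (cmp I01 V hV u) s) t.2.1 (hcw.mono hsub) (by
      intro s hs
      have hs' : s ∈ Set.Icc (0 : ℝ) 1 := hsub ⟨hs.1.le, hs.2.le⟩
      have e : ext (cmp I01 V hV u) s = V (w s) := by
        have := ext_coe (cmp I01 V hV u) ⟨s, hs'⟩
        simp only at this
        rw [this, ← hu ⟨s, hs'⟩]; rfl
      rw [e]
      exact (h s hs').hasDerivAt (Icc_mem_nhds hs.1 (hs.2.trans_le t.2.2)))
    ((ext_cont _).intervalIntegrable _ _)
  rw [hI, hu]; abel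

/-- Smooth dependence on initial conditions. -/
theorem flow_contDiff {V : G → G} (hV : ContDiff ℝ (⊤ : ℕ∞) V) (sol : G → ℝ → G)
    (hs : ∀ x, Sol V (sol x)) (h0 : ∀ x, sol x 0 = x) :
    ContDiff ℝ (⊤ : ℕ∞) (fun x => sol x 1) := by
  have hV1 : ContDiff ℝ 1 V := hV.of_le (by exact_mod_cast le_top)
  rw [contDiff_iff_contDiffAt]
  intro x0
  let u0 : C(I01, G) := ⟨fun t => sol x0 t, by
    have : ContinuousOn (sol x0) (Set.Icc 0 1) := fun t ht => (hs x0 t ht).continuousWithinAt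
    exact continuousOn_iff_continuous_domRestrict.1 this⟩
  let N : C(I01, G) → C(I01, G) := fun u => u - J G (cmp I01 V hV.continuous u)
  have hN : ContDiff ℝ (⊤ : ℕ∞) N := contDiff_id.sub ((J G).contDiff.comp (cmp_contDiff V hV))
  obtain ⟨U, hU⟩ := volterra_isUnit (cmp I01 (fderiv ℝ V) (hV1.continuous_fderiv (by norm_num)) u0)
  let e : C(I01, G) ≃L[ℝ] C(I01, G) := ContinuousLinearEquiv.ofUnit U
  have hN' : HasFDerivAt N (e : C(I01, G) →L[ℝ] C(I01, G)) u0 := by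
    have h1 : HasFDerivAt N (1 - (J G) ∘L (pw I01 G G (cmp I01 (fderiv ℝ V)
      (hV1.continuous_fderiv (by norm_num)) u0))) u0 :=
      (hasFDerivAt_id u0).sub ((J G).hasFDerivAt.comp u0 (cmp_hasFDerivAt V hV1 u0))
    rw [← hU] at h1
    exact h1
  have hn : ((⊤ : ℕ∞) : WithTop ℕ∞) ≠ 0 := by simp
  have hinv := hN.contDiffAt.to_localInverse hN' hn
  have hN0 : N u0 = ContinuousMap.const _ x0 := by
    have := eq_of_sol hV.continuous u0 (sol x0) (fun t => rfl) (hs x0)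
    rw [h0] at this; exact this
  rw [hN0] at hinv
  set g := hN.contDiffAt.localInverse hN' hn with hg
  have hright : ∀ᶠ y in 𝓝 (N u0), N (g y) = y :=
    (hN.contDiffAt.hasStrictFDerivAt' hN' hn).eventually_right_inverse
  let cst : G →L[ℝ] C(I01, G) := ContinuousLinearMap.const ℝ I01
  have hcst : ∀ x, cst x = ContinuousMap.const _ x := fun x => rfl
  let ev : C(I01, G) →L[ℝ] G := ContinuousMap.evalCLM ℝ (⟨1, by simp⟩ : I01)
  have hsm : ContDiffAt ℝ (⊤ : ℕ∞) (fun x => ev (g (cst x))) x0 := by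
    refine ev.contDiff.contDiffAt.comp x0 (ContDiffAt.comp x0 ?_ cst.contDiff.contDiffAt)
    exact hinv
  refine hsm.congr_of_eventuallyEq ?_
  rw [hN0] at hright
  have := (cst.continuous.tendsto x0).eventually hright
  filter_upwards [this] with x hx
  obtain ⟨s1, s2⟩ := sol_of_eq hV.continuous (g (cst x)) x hx
  have := (hs x).unique hV1 s1 (by rw [h0, s2]) (show (1 : ℝ) ∈ Set.Icc (0 : ℝ) 1 by simp)
  simp only [this]
  exact ext_coe _ (⟨1, by simp⟩ : I01)

end Flow
end FibAux

namespace FibAux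
open Set Topology MeasureTheory

section Abs
variable {E : Type} [NormedAddCommGroup E] [NormedSpace ℝ E] [FiniteDimensional ℝ E]

lemma nhdsIci {t : ℝ} (ht : t ∈ Set.Ico (0 : ℝ) 1) : Set.Icc (0 : ℝ) 1 ∈ 𝓝[Set.Ici t] t :=
  Filter.mem_of_superset (Icc_mem_nhdsGE ht.2) (Set.Icc_subset_Icc_left ht.1)

/-- Global existence when `ρ` is proper and conserved for large values. -/
lemma exists_sol (Z : E → E) (hZ : ContDiff ℝ (⊤ : ℕ∞) Z) (ρ : E → ℝ)
    (hρ : ContDiff ℝ (⊤ : ℕ∞) ρ) (hprop : ∀ K, ∃ r, ∀ z, ρ z ≤ K → ‖z‖ ≤ r) (R : ℝ)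
    (hcons : ∀ z, R ≤ ρ z → fderiv ℝ ρ z (Z z) = 0) (x : E) :
    ∃ u : ℝ → E, Sol Z u ∧ u 0 = x := by
  obtain ⟨r, hr⟩ := hprop (max (ρ x) R + 1)
  let χ : ContDiffBump (0 : E) := ⟨|r| + 1, |r| + 2, by positivity, by linarith⟩
  let Y : E → E := fun z => χ z • Z z
  have hY : ContDiff ℝ (⊤ : ℕ∞) Y := χ.contDiff.smul hZ
  have hYc : HasCompactSupport Y := χ.hasCompactSupport.smul_right
  obtain ⟨K, hK⟩ := hY.lipschitzWith_of_hasCompactSupport hYc (by simp)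
  obtain ⟨L, hL⟩ := hYc.exists_bound_of_continuous hY.continuous
  have hPL : IsPicardLindelof (fun _ => Y) (tmin := 0) (tmax := 1) ⟨0, by simp⟩ x
      (Real.toNNReal L) 0 (Real.toNNReal L) K := by
    refine IsPicardLindelof.of_time_independent (fun z _ => (hL z).trans (Real.le_coe_toNNReal L))
      hK.lipschitzOnWith ?_
    simp
  obtain ⟨u, hu0, hu⟩ := hPL.exists_eq_forall_mem_Icc_hasDerivWithinAt₀
  simp only at hu0
  have hder : ∀ t ∈ Set.Icc (0 : ℝ) 1, HasDerivWithinAt (fun s => ρ (u s))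
      (χ (u t) * fderiv ℝ ρ (u t) (Z (u t))) (Set.Icc 0 1) t := by
    intro t ht
    have h1 := ((hρ.differentiable (by simp)) (u t)).hasFDerivAt.comp_hasDerivWithinAt t (hu t ht)
    have e : (fderiv ℝ ρ (u t)) (Y (u t)) = χ (u t) * fderiv ℝ ρ (u t) (Z (u t)) := by
      simp [Y]
    rw [e] at h1
    exact h1
  have hbd := image_le_of_deriv_right_lt_deriv_boundary (a := 0) (b := 1) (f := fun s => ρ (u s))
    (f' := fun t => χ (u t) * fderiv ℝ ρ (u t) (Z (u t)))
    (B := fun t => max (ρ x) R + t) (B' := fun _ => 1)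
    (fun t ht => (hder t ht).continuousWithinAt)
    (fun t ht => (hder t ⟨ht.1, ht.2.le⟩).mono_of_mem_nhdsWithin (nhdsIci ht))
    (by simp [hu0]) (fun t => by simpa using (hasDerivAt_id t).const_add (max (ρ x) R))
    (by
      intro t ht h
      have : R ≤ ρ (u t) := by
        rw [h]; linarith [le_max_right (ρ x) R, ht.1]
      rw [hcons _ this]; norm_num)
  refine ⟨u, fun t ht => ?_, hu0⟩
  have h1 : ‖u t‖ ≤ r := hr _ ((hbd ht).trans (by linarith [ht.2]))
  have h2 : χ (u t) = 1 := χ.one_of_mem_closedBall (by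
    rw [mem_closedBall_zero_iff]
    show ‖u t‖ ≤ |r| + 1
    linarith [le_abs_self r])
  have := hu t ht
  simp only [Y, h2, one_smul] at this
  exact this

lemma Sol.reverse {Z : E → E} {u : ℝ → E} (hu : Sol Z u) :
    Sol (fun z => - Z z) (fun t => u (1 - t)) := by
  intro t ht
  have ht' : 1 - t ∈ Set.Icc (0 : ℝ) 1 := ⟨by linarith [ht.2], by linarith [ht.1]⟩
  have h1 : HasDerivWithinAt (fun t : ℝ => 1 - t) (-1) (Set.Icc 0 1) t := by
    simpa using ((hasDerivAt_id t).const_sub 1).hasDerivWithinAt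
  have := (hu (1 - t) ht').scomp t h1 (fun s hs => ⟨by linarith [hs.2], by linarith [hs.1]⟩)
  rw [neg_smul, one_smul] at this
  exact this

theorem fib_abstract (f : E → ℂ) (hf : ContDiff ℝ (⊤ : ℕ∞) f) (ρ : E → ℝ)
    (hρ : ContDiff ℝ (⊤ : ℕ∞) ρ) (hprop : ∀ K, ∃ r, ∀ z, ρ z ≤ K → ‖z‖ ≤ r) (R : ℝ)
    (v : ℂ) (δ : ℝ) (hδ : 0 < δ) (X : E → ℂ →L[ℝ] E)
    (hX : ContDiffOn ℝ (⊤ : ℕ∞) X (f ⁻¹' Metric.ball v δ))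
    (hfX : ∀ z, f z ∈ Metric.ball v δ → ∀ w, fderiv ℝ f z (X z w) = w)
    (hρX : ∀ z, f z ∈ Metric.ball v δ → R ≤ ρ z → ∀ w, fderiv ℝ ρ z (X z w) = 0) :
    ∃ (Φ : E → ℂ × E) (Ψ : ℂ × E → E),
        (∀ x ∈ f ⁻¹' Metric.ball v (δ / 3),
          Φ x ∈ Metric.ball v (δ / 3) ×ˢ (f ⁻¹' {v}) ∧ Ψ (Φ x) = x ∧ (Φ x).1 = f x) ∧
        (∀ p ∈ Metric.ball v (δ / 3) ×ˢ (f ⁻¹' {v}),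
          Ψ p ∈ f ⁻¹' Metric.ball v (δ / 3) ∧ Φ (Ψ p) = p) ∧
        ContDiff ℝ (⊤ : ℕ∞) Φ ∧ ContDiff ℝ (⊤ : ℕ∞) Ψ := by
  let β : ContDiffBump v := ⟨δ / 3, δ / 2, by positivity, by linarith⟩
  let Y : E → ℂ →L[ℝ] E := fun z => β (f z) • X z
  have hβout : ∀ y, y ∉ Metric.ball v δ → β y = 0 := fun y hy => β.zero_of_le_dist (by
    rw [Metric.mem_ball, not_lt] at hy
    show δ / 2 ≤ _
    linarith)
  have hY : ContDiff ℝ (⊤ : ℕ∞) Y := by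
    rw [contDiff_iff_contDiffAt]
    intro z
    by_cases hz : f z ∈ Metric.ball v δ
    · have ho : f ⁻¹' Metric.ball v δ ∈ 𝓝 z :=
        (Metric.isOpen_ball.preimage hf.continuous).mem_nhds hz
      exact (β.contDiff.comp hf).contDiffAt.smul (hX.contDiffAt ho)
    · have hz' : f z ∈ (Metric.closedBall v (δ / 2))ᶜ := by
        rw [Metric.mem_ball, not_lt] at hz
        simp only [Set.mem_compl_iff, Metric.mem_closedBall, not_le]
        linarith
      have ho : f ⁻¹' (Metric.closedBall v (δ / 2))ᶜ ∈ 𝓝 z :=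
        (Metric.isClosed_closedBall.isOpen_compl.preimage hf.continuous).mem_nhds hz'
      refine (contDiffAt_const (c := (0 : ℂ →L[ℝ] E))).congr_of_eventuallyEq ?_
      filter_upwards [ho] with y hy
      have : β (f y) = 0 := β.zero_of_le_dist (by
        simp only [Set.mem_preimage, Set.mem_compl_iff, Metric.mem_closedBall, not_le] at hy
        exact hy.le)
      simp [Y, this]
  have hfY : ∀ z w, fderiv ℝ f z (Y z w) = β (f z) • w := by
    intro z w
    by_cases hz : f z ∈ Metric.ball v δ
    · simp [Y, hfX z hz w]
    · simp [Y, hβout _ hz]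
  have hρY : ∀ z w, R ≤ ρ z → fderiv ℝ ρ z (Y z w) = 0 := by
    intro z w hR
    by_cases hz : f z ∈ Metric.ball v δ
    · simp [Y, hρX z hz hR w]
    · simp [Y, hβout _ hz]
  have hYw : ∀ w, ContDiff ℝ (⊤ : ℕ∞) fun z => Y z w := fun w => hY.clm_apply contDiff_const
  choose sol hs h0 using fun (p : E × ℂ) =>
    exists_sol (fun z => Y z p.2) (hYw p.2) ρ hρ hprop R (fun z hR => hρY z p.2 hR) p.1
  -- joint smoothness
  have hF : ContDiff ℝ (⊤ : ℕ∞) (fun p : E × ℂ => sol p 1) := by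
    have hV : ContDiff ℝ (⊤ : ℕ∞) (fun p : E × ℂ => (Y p.1 p.2, (0 : ℂ))) :=
      ((hY.comp contDiff_fst).clm_apply contDiff_snd).prodMk contDiff_const
    have := flow_contDiff hV (fun p t => (sol p t, p.2)) (fun p t ht =>
      (hs p t ht).prodMk (hasDerivWithinAt_const t _ p.2)) (fun p => by rw [h0])
    exact contDiff_fst.comp this
  -- motion of the values
  have hval : ∀ p : E × ℂ, f p.1 ∈ Metric.ball v (δ / 3) → f p.1 + p.2 ∈ Metric.ball v (δ / 3) →
      f (sol p 1) = f p.1 + p.2 := by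
    intro p h1 h2
    have hb : ContDiff ℝ 1 (fun y : ℂ => β y • p.2) := β.contDiff.smul contDiff_const
    have s1 : Sol (fun y : ℂ => β y • p.2) (fun t => f (sol p t)) := by
      intro t ht
      have h := ((hf.differentiable (by simp)) (sol p t)).hasFDerivAt.comp_hasDerivWithinAt t
        (hs p t ht)
      rw [hfY] at h
      exact h
    have s2 : Sol (fun y : ℂ => β y • p.2) (fun t => f p.1 + t • p.2) := by
      intro t ht
      have hm : f p.1 + t • p.2 ∈ Metric.ball v (δ / 3) := by
        have := (convex_ball v (δ / 3)).add_smul_mem h1 h2 ht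
        exact this
      have e : β (f p.1 + t • p.2) = 1 := β.one_of_mem_closedBall (Metric.ball_subset_closedBall hm)
      simp only [e, one_smul]
      have := ((hasDerivAt_id t).smul_const p.2).const_add (f p.1)
      simpa using this.hasDerivWithinAt
    have := s1.unique hb s2 (by simp [h0]) (show (1 : ℝ) ∈ Set.Icc (0 : ℝ) 1 by simp)
    simpa using this
  have hrev : ∀ (x : E) (w : ℂ), sol (sol (x, w) 1, -w) 1 = x := by
    intro x w
    have r1 := (hs (x, w)).reverse
    have r2 := hs (sol (x, w) 1, -w)
    simp only [map_neg] at r2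
    have := r2.unique ((hYw w).neg.of_le (by exact_mod_cast le_top)) r1 (by simp [h0])
      (show (1 : ℝ) ∈ Set.Icc (0 : ℝ) 1 by simp)
    rw [this]
    simp [h0]
  have hv : v ∈ Metric.ball v (δ / 3) := Metric.mem_ball_self (by positivity)
  have hΨv : ∀ p ∈ Metric.ball v (δ / 3) ×ˢ (f ⁻¹' {v}), f (sol (p.2, p.1 - v) 1) = p.1 := by
    rintro ⟨w, x⟩ ⟨hw, hx⟩
    simp only [Set.mem_preimage, Set.mem_singleton_iff] at hx hw
    have := hval (x, w - v) (by simp only [hx]; exact hv) (by simpa [hx] using hw)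
    simpa [hx] using this
  refine ⟨fun x => (f x, sol (x, v - f x) 1), fun p => sol (p.2, p.1 - v) 1, ?_, ?_, ?_, ?_⟩
  · intro x hx
    refine ⟨⟨hx, ?_⟩, ?_, rfl⟩
    · have := hval (x, v - f x) hx (by simpa using hv)
      simpa using this
    · have := hrev x (v - f x)
      rw [neg_sub] at this
      exact this
  · intro p hp
    have h := hΨv p hp
    refine ⟨by rw [Set.mem_preimage, h]; exact hp.1, ?_⟩
    simp only [h]
    have := hrev p.2 (p.1 - v)
    rw [neg_sub] at this
    rw [this]
  · exact hf.prodMk (hF.comp (contDiff_id.prodMk (contDiff_const.sub hf)))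
  · exact hF.comp (contDiff_snd.prodMk (contDiff_fst.sub contDiff_const))

end Abs
end FibAux

namespace FibAux
open Set Topology MeasureTheory Mixed
variable {n : ℕ}

/-! ### derivative of a mixed polynomial -/

lemma mono_contDiff (p : Fin n → ℕ) :
    ContDiff ℝ (⊤ : ℕ∞) (fun z : Fin n → ℂ => ∏ j, z j ^ p j) :=
  contDiff_prod fun j _ => (contDiff_apply ℝ ℂ j).pow _

lemma cmono_contDiff (p : Fin n → ℕ) :
    ContDiff ℝ (⊤ : ℕ∞) (fun z : Fin n → ℂ => ∏ j, (starRingEnd ℂ) (z j) ^ p j) :=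
  contDiff_prod fun j _ => (Complex.conjCLE.contDiff.comp (contDiff_apply ℝ ℂ j)).pow _

lemma eval_contDiff (c : MixedCoeff n) : ContDiff ℝ (⊤ : ℕ∞) (eval c) :=
  ContDiff.sum fun p _ => (contDiff_const.mul (mono_contDiff p.1)).mul (cmono_contDiff p.2)

lemma dz_contDiff (c : MixedCoeff n) (i : Fin n) : ContDiff ℝ (⊤ : ℕ∞) (dz c i) :=
  ContDiff.sum fun p _ => (contDiff_const.mul (mono_contDiff _)).mul (cmono_contDiff p.2)

lemma dzbar_contDiff (c : MixedCoeff n) (i : Fin n) : ContDiff ℝ (⊤ : ℕ∞) (dzbar c i) :=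
  ContDiff.sum fun p _ => (contDiff_const.mul (mono_contDiff p.1)).mul (cmono_contDiff _)

lemma mono_hasFDerivAt (p : Fin n → ℕ) (z : Fin n → ℂ) :
    HasFDerivAt (fun z : Fin n → ℂ => ∏ j, z j ^ p j)
      (∑ i, ((p i : ℂ) * ∏ j, z j ^ (p j - if j = i then 1 else 0)) •
        (ContinuousLinearMap.proj i : (Fin n → ℂ) →L[ℝ] ℂ)) z := by
  have h := HasFDerivAt.finsetProd (u := Finset.univ) (𝕜 := ℝ) (x := z)
    (g := fun j (z : Fin n → ℂ) => z j ^ p j)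
    (g' := fun j => ((p j : ℂ) * z j ^ (p j - 1)) • (ContinuousLinearMap.proj j : (Fin n → ℂ) →L[ℝ] ℂ))
    (fun j _ => by
      have := (ContinuousLinearMap.proj j : (Fin n → ℂ) →L[ℝ] ℂ).hasFDerivAt (x := z) |>.pow (p j)
      refine this.congr_fderiv ?_
      ext h
      simp)
  refine h.congr_fderiv ?_
  refine Finset.sum_congr rfl fun i _ => ?_
  rw [smul_smul]
  congr 1
  rw [← Finset.mul_prod_erase Finset.univ (fun j => z j ^ (p j - if j = i then 1 else 0))
    (Finset.mem_univ i)]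
  have : ∏ j ∈ Finset.univ.erase i, z j ^ (p j - if j = i then 1 else 0) =
      ∏ j ∈ Finset.univ.erase i, z j ^ p j :=
    Finset.prod_congr rfl fun j hj => by rw [if_neg (Finset.ne_of_mem_erase hj), Nat.sub_zero]
  rw [this, if_pos rfl]
  ring

/-- componentwise conjugation -/
def conjPi (n : ℕ) : (Fin n → ℂ) →L[ℝ] (Fin n → ℂ) :=
  ContinuousLinearMap.pi fun i => (Complex.conjCLE : ℂ →L[ℝ] ℂ) ∘L ContinuousLinearMap.proj i

lemma eval_fderiv (c : MixedCoeff n) (z h : Fin n → ℂ) :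
    fderiv ℝ (eval c) z h = ∑ i, (dz c i z * h i + dzbar c i z * (starRingEnd ℂ) (h i)) := by
  have hq : ∀ p : Fin n → ℕ, HasFDerivAt (fun z : Fin n → ℂ => ∏ i, (starRingEnd ℂ) (z i) ^ p i)
      _ z := fun p => HasFDerivAt.comp (g := fun z : Fin n → ℂ => ∏ j, z j ^ p j) z
        (mono_hasFDerivAt p (conjPi n z)) (conjPi n).hasFDerivAt
  have hm : ∀ p, HasFDerivAt (fun z : Fin n → ℂ =>
      c p * (∏ i, z i ^ p.1 i) * ∏ i, (starRingEnd ℂ) (z i) ^ p.2 i) _ z := fun p =>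
    ((mono_hasFDerivAt p.1 z).const_mul (c p)).mul (hq p.2)
  have hd : HasFDerivAt (eval c) _ z := HasFDerivAt.fun_sum (u := c.support) fun p _ => hm p
  rw [hd.fderiv, _root_.sum_apply]
  rw [Finset.sum_add_distrib (f := fun i => dz c i z * h i)]
  simp only [dz, dzbar, Finsupp.sum, Finset.sum_mul]
  rw [Finset.sum_comm (s := Finset.univ), Finset.sum_comm (s := Finset.univ)]
  refine Eq.trans ?_ Finset.sum_add_distrib
  refine Finset.sum_congr rfl fun p _ => ?_
  simp only [conjPi, ContinuousLinearMap.add_apply, ContinuousLinearMap.smul_apply,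
    ContinuousLinearMap.comp_apply, _root_.sum_apply, ContinuousLinearMap.proj_apply,
    ContinuousLinearMap.coe_pi', smul_eq_mul, Finset.mul_sum, Function.comp_apply]
  rw [add_comm]
  congr 1
  · refine Finset.sum_congr rfl fun i _ => ?_
    ring
  · refine Finset.sum_congr rfl fun i _ => ?_
    simp
    ring

/-! ### inner product -/

/-- the real inner product on `ℂⁿ` -/
def ip (a b : Fin n → ℂ) : ℝ := ∑ i, ((a i).re * (b i).re + (a i).im * (b i).im)

lemma ip_comm (a b : Fin n → ℂ) : ip a b = ip b a := by
  unfold ip; exact Finset.sum_congr rfl fun i _ => by ring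

lemma ip_add (a b d : Fin n → ℂ) : ip a (b + d) = ip a b + ip a d := by
  unfold ip; rw [← Finset.sum_add_distrib]; exact Finset.sum_congr rfl fun i _ => by simp; ring

lemma ip_smul (r : ℝ) (a b : Fin n → ℂ) : ip a (r • b) = r * ip a b := by
  unfold ip; rw [Finset.mul_sum]; exact Finset.sum_congr rfl fun i _ => by simp; ring

lemma ip_sub (a b d : Fin n → ℂ) : ip a (b - d) = ip a b - ip a d := by
  unfold ip; rw [← Finset.sum_sub_distrib]; exact Finset.sum_congr rfl fun i _ => by simp; ring

lemma ip_add' (a b d : Fin n → ℂ) : ip (b + d) a = ip b a + ip d a := by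
  rw [ip_comm, ip_add, ip_comm a, ip_comm a]

lemma ip_sub' (a b d : Fin n → ℂ) : ip (b - d) a = ip b a - ip d a := by
  rw [ip_comm, ip_sub, ip_comm a, ip_comm a]

lemma ip_smul' (r : ℝ) (a b : Fin n → ℂ) : ip (r • b) a = r * ip b a := by
  rw [ip_comm, ip_smul, ip_comm a]

lemma ip_nonneg (a : Fin n → ℂ) : 0 ≤ ip a a :=
  Finset.sum_nonneg fun i _ => add_nonneg (mul_self_nonneg _) (mul_self_nonneg _)

lemma normSq_le_ip (a : Fin n → ℂ) (i : Fin n) : ‖a i‖ ^ 2 ≤ ip a a := by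
  rw [← Complex.normSq_eq_norm_sq, Complex.normSq_apply]
  exact Finset.single_le_sum
    (f := fun i => (a i).re * (a i).re + (a i).im * (a i).im)
    (fun i _ => add_nonneg (mul_self_nonneg _) (mul_self_nonneg _)) (Finset.mem_univ i)

lemma ip_pos {a : Fin n → ℂ} (h : a ≠ 0) : 0 < ip a a := by
  refine lt_of_le_of_ne (ip_nonneg a) fun h0 => h ?_
  funext i
  have := normSq_le_ip a i
  rw [← h0] at this
  have h2 : ‖a i‖ = 0 := by nlinarith [norm_nonneg (a i)]
  simpa using h2

lemma ip_contDiff {E : Type} [NormedAddCommGroup E] [NormedSpace ℝ E] {a b : E → Fin n → ℂ}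
    (ha : ContDiff ℝ (⊤ : ℕ∞) a) (hb : ContDiff ℝ (⊤ : ℕ∞) b) :
    ContDiff ℝ (⊤ : ℕ∞) fun x => ip (a x) (b x) := by
  have ha' := contDiff_pi.1 ha
  have hb' := contDiff_pi.1 hb
  refine ContDiff.sum fun i _ => ?_
  exact ((Complex.reCLM.contDiff.comp (ha' i)).mul (Complex.reCLM.contDiff.comp (hb' i))).add
    ((Complex.imCLM.contDiff.comp (ha' i)).mul (Complex.imCLM.contDiff.comp (hb' i)))

lemma ip_self_fderiv (z h : Fin n → ℂ) :
    fderiv ℝ (fun z : Fin n → ℂ => ip z z) z h = 2 * ip z h := by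
  have hd : DifferentiableAt ℝ (fun z : Fin n → ℂ => ip z z) z :=
    (ip_contDiff contDiff_id contDiff_id).differentiable (by simp) z
  have h1 : HasDerivAt (fun t : ℝ => z + t • h) h 0 := by
    simpa using ((hasDerivAt_id (0 : ℝ)).smul_const h).const_add z
  have h2 : HasDerivAt (fun t : ℝ => ip (z + t • h) (z + t • h))
      (fderiv ℝ (fun z : Fin n → ℂ => ip z z) z h) 0 := by
    have hd' : HasFDerivAt (fun z : Fin n → ℂ => ip z z)
      (fderiv ℝ (fun z : Fin n → ℂ => ip z z) z) (z + (0 : ℝ) • h) := by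
      simpa using hd.hasFDerivAt
    exact hd'.comp_hasDerivAt 0 h1
  have h3 : HasDerivAt (fun t : ℝ => ip z z + t * (2 * ip z h) + t ^ 2 * ip h h)
      (2 * ip z h) 0 := by
    have := (((hasDerivAt_id (0 : ℝ)).mul_const (2 * ip z h)).const_add (ip z z)).add
      ((hasDerivAt_pow 2 (0 : ℝ)).mul_const (ip h h))
    have e : (1 : ℝ) * (2 * ip z h) + ((2 : ℕ) : ℝ) * 0 ^ (2 - 1) * ip h h = 2 * ip z h := by simp
    rw [e] at this
    exact this
  refine h2.unique (h3.congr_of_eventuallyEq (Filter.Eventually.of_forall fun t => ?_))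
  simp only [ip_add, ip_add', ip_smul, ip_smul', ip_comm h z]
  ring

/-! ### gradients -/

def ga (c : MixedCoeff n) (z : Fin n → ℂ) : Fin n → ℂ :=
  fun i => (starRingEnd ℂ) (dz c i z) + dzbar c i z
def gb (c : MixedCoeff n) (z : Fin n → ℂ) : Fin n → ℂ :=
  fun i => Complex.I * (starRingEnd ℂ) (dz c i z) - Complex.I * dzbar c i z
def gm (c : MixedCoeff n) (m : ℂ) (z : Fin n → ℂ) : Fin n → ℂ :=
  m.re • ga c z + m.im • gb c z

lemma gm_apply (c : MixedCoeff n) (m : ℂ) (z : Fin n → ℂ) (i : Fin n) :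
    gm c m z i = m * (starRingEnd ℂ) (dz c i z) + (starRingEnd ℂ) m * dzbar c i z := by
  apply Complex.ext <;> simp [gm, ga, gb] <;> ring

lemma ga_contDiff (c : MixedCoeff n) : ContDiff ℝ (⊤ : ℕ∞) (ga c) :=
  contDiff_pi.2 fun i => (Complex.conjCLE.contDiff.comp (dz_contDiff c i)).add (dzbar_contDiff c i)

lemma gb_contDiff (c : MixedCoeff n) : ContDiff ℝ (⊤ : ℕ∞) (gb c) :=
  contDiff_pi.2 fun i => (contDiff_const.mul (Complex.conjCLE.contDiff.comp (dz_contDiff c i))).sub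
    (contDiff_const.mul (dzbar_contDiff c i))

lemma fderiv_re (c : MixedCoeff n) (z h : Fin n → ℂ) :
    (fderiv ℝ (eval c) z h).re = ip (ga c z) h := by
  rw [eval_fderiv, Complex.re_sum]
  unfold ip
  refine Finset.sum_congr rfl fun i _ => ?_
  simp [ga]; ring

lemma fderiv_im (c : MixedCoeff n) (z h : Fin n → ℂ) :
    (fderiv ℝ (eval c) z h).im = ip (gb c z) h := by
  rw [eval_fderiv, Complex.im_sum]
  unfold ip
  refine Finset.sum_congr rfl fun i _ => ?_
  simp [gb]; ring

end FibAux

namespace FibAux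
open Set Topology MeasureTheory Mixed
variable {n : ℕ}

/-! ### the lifting field -/

lemma ip_gm (c : MixedCoeff n) (m : ℂ) (z h : Fin n → ℂ) :
    ip (gm c m z) h = m.re * ip (ga c z) h + m.im * ip (gb c z) h := by
  simp only [gm, ip_add', ip_smul']

lemma sing_of_gm (c : MixedCoeff n) {m : ℂ} (hm : m ≠ 0) {z : Fin n → ℂ} (h : gm c m z = 0) :
    z ∈ Sing c := by
  intro hs
  obtain ⟨x, hx⟩ := hs m
  have h1 := ip_gm c m z x
  rw [← fderiv_re, ← fderiv_im, hx, h] at h1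
  have h2 : ip (0 : Fin n → ℂ) x = 0 := by simp [ip]
  rw [h2] at h1
  apply hm
  apply Complex.ext
  · simp only [Complex.zero_re]; nlinarith [mul_self_nonneg m.re, mul_self_nonneg m.im]
  · simp only [Complex.zero_im]; nlinarith [mul_self_nonneg m.re, mul_self_nonneg m.im]

lemma far_bound (c : MixedCoeff n) {v : ℂ} (hv : v ∉ Sset c) :
    ∃ R : ℝ, 0 ≤ R ∧ ∃ δ > 0, ∀ z, eval c z ∈ Metric.ball v δ → R < ‖z‖ → z ∉ Milnor c := by
  by_contra hcon
  push Not at hcon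
  have hk : ∀ k : ℕ, ∃ z, eval c z ∈ Metric.ball v (1 / ((k : ℝ) + 1)) ∧ (k : ℝ) < ‖z‖ ∧
      z ∈ Milnor c := fun k => by
    obtain ⟨z, h⟩ := hcon k (Nat.cast_nonneg k) (1 / ((k : ℝ) + 1)) (by positivity)
    exact ⟨z, h⟩
  choose zk h1 h2 h3 using hk
  refine hv ⟨zk, h3, ?_, ?_⟩
  · exact tendsto_atTop_mono (fun k => (h2 k).le) tendsto_natCast_atTop_atTop
  · rw [tendsto_iff_dist_tendsto_zero]
    exact squeeze_zero (fun _ => dist_nonneg) (fun k => (Metric.mem_ball.1 (h1 k)).le)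
      tendsto_one_div_add_atTop_nhds_zero_nat

lemma gm_cont (c : MixedCoeff n) :
    Continuous fun q : (Fin n → ℂ) × ℂ => gm c q.2 q.1 := by
  unfold gm
  have h1 := (ga_contDiff c).continuous
  have h2 := (gb_contDiff c).continuous
  exact ((Complex.continuous_re.comp continuous_snd).smul (h1.comp continuous_fst)).add
    ((Complex.continuous_im.comp continuous_snd).smul (h2.comp continuous_fst))

lemma near_bound (c : MixedCoeff n) {v : ℂ} (hv : v ∉ eval c '' Sing c) (R : ℝ) :
    ∃ δ > 0, ∀ z, eval c z ∈ Metric.ball v δ → ‖z‖ ≤ R → ∀ m : ℂ, m ≠ 0 → gm c m z ≠ 0 := by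
  let K : Set ((Fin n → ℂ) × ℂ) :=
    (Metric.closedBall 0 R ×ˢ Metric.sphere 0 1) ∩ {q | gm c q.2 q.1 = 0}
  have hK : IsCompact K := ((isCompact_closedBall _ _).prod (isCompact_sphere _ _)).inter_right
    (isClosed_eq (gm_cont c) continuous_const)
  have hI : IsCompact ((fun q : (Fin n → ℂ) × ℂ => eval c q.1) '' K) :=
    hK.image ((eval_contDiff c).continuous.comp continuous_fst)
  have hvI : v ∈ ((fun q : (Fin n → ℂ) × ℂ => eval c q.1) '' K)ᶜ := by
    rintro ⟨⟨z, m⟩, ⟨⟨_, hm⟩, hg⟩, rfl⟩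
    refine hv ⟨z, sing_of_gm c (m := m) ?_ hg, rfl⟩
    rintro rfl
    simp at hm
  obtain ⟨δ, hδ, hb⟩ := Metric.isOpen_iff.1 hI.isClosed.isOpen_compl v hvI
  refine ⟨δ, hδ, fun z hz hzR m hm hg => hb hz ⟨(z, (‖m‖⁻¹ : ℝ) • m), ⟨⟨?_, ?_⟩, ?_⟩, rfl⟩⟩
  · simpa using hzR
  · simp [norm_smul, norm_ne_zero_iff.2 hm]
  · show gm c ((‖m‖⁻¹ : ℝ) • m) z = 0
    have : gm c ((‖m‖⁻¹ : ℝ) • m) z = (‖m‖⁻¹ : ℝ) • gm c m z := by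
      simp only [gm, Complex.smul_re, Complex.smul_im, smul_add, smul_smul, smul_eq_mul]
    rw [this, hg, smul_zero]

/-- modified projection orthogonal to the radial direction -/
def Q (χ : ℝ) (z a : Fin n → ℂ) : Fin n → ℂ := (χ + ip z z) • a - ip z a • z

lemma ip_Q (χ : ℝ) (z a b : Fin n → ℂ) :
    ip b (Q χ z a) = (χ + ip z z) * ip b a - ip z a * ip z b := by
  simp only [Q, ip_sub, ip_smul, ip_comm b z]

lemma cs_aux (z a : Fin n → ℂ) :
    ip (ip z z • a - ip z a • z) (ip z z • a - ip z a • z) =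
      ip z z * (ip z z * ip a a - ip z a ^ 2) := by
  simp only [ip_sub, ip_sub', ip_smul, ip_smul', ip_comm a z]
  ring

lemma cs (z a : Fin n → ℂ) : 0 ≤ ip z z * ip a a - ip z a ^ 2 := by
  by_cases hz : z = 0
  · subst hz
    simp [ip]
  · have h := ip_nonneg (ip z z • a - ip z a • z)
    rw [cs_aux] at h
    exact nonneg_of_mul_nonneg_right h (ip_pos hz)

lemma cs_strict {z a : Fin n → ℂ} (hz : z ≠ 0) (h : ∀ l : ℝ, a ≠ l • z) :
    0 < ip z z * ip a a - ip z a ^ 2 := by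
  have hp := ip_pos hz
  have h2 : ip z z • a - ip z a • z ≠ 0 := by
    intro h0
    apply h ((ip z z)⁻¹ * ip z a)
    rw [sub_eq_zero] at h0
    rw [mul_smul, ← h0, smul_smul, inv_mul_cancel₀ hp.ne', one_smul]
  have h3 := ip_pos h2
  rw [cs_aux] at h3
  exact (mul_pos_iff_of_pos_left hp).1 h3

lemma Q_pos {χ : ℝ} (hχ : 0 ≤ χ) (z a : Fin n → ℂ)
    (h : (0 < χ ∧ a ≠ 0) ∨ (z ≠ 0 ∧ ∀ l : ℝ, a ≠ l • z)) : 0 < ip a (Q χ z a) := by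
  have e : ip a (Q χ z a) = χ * ip a a + (ip z z * ip a a - ip z a ^ 2) := by
    rw [ip_Q]; ring
  rw [e]
  rcases h with ⟨h1, h2⟩ | ⟨h1, h2⟩
  · have := mul_pos h1 (ip_pos h2)
    linarith [cs z a]
  · have := mul_nonneg hχ (ip_nonneg a)
    linarith [cs_strict h1 h2]

/-- the Gram determinant -/
def Gdet (χ : ℝ) (z a b : Fin n → ℂ) : ℝ :=
  ip a (Q χ z a) * ip b (Q χ z b) - ip a (Q χ z b) ^ 2

lemma ip_Q_symm (χ : ℝ) (z a b : Fin n → ℂ) : ip b (Q χ z a) = ip a (Q χ z b) := by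
  rw [ip_Q, ip_Q, ip_comm b a]; ring

lemma Gdet_pos (c : MixedCoeff n) (χ : ℝ) (z : Fin n → ℂ)
    (h : ∀ m : ℂ, m ≠ 0 → 0 < ip (gm c m z) (Q χ z (gm c m z))) :
    0 < Gdet χ z (ga c z) (gb c z) := by
  have key : ∀ m : ℂ, ip (gm c m z) (Q χ z (gm c m z)) =
      m.re ^ 2 * ip (ga c z) (Q χ z (ga c z)) + 2 * m.re * m.im * ip (ga c z) (Q χ z (gb c z)) +
      m.im ^ 2 * ip (gb c z) (Q χ z (gb c z)) := by
    intro m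
    simp only [ip_Q, gm, ip_add, ip_add', ip_smul, ip_smul', ip_comm (gb c z) (ga c z)]
    ring
  have hC : 0 < ip (gb c z) (Q χ z (gb c z)) := by
    have := h Complex.I Complex.I_ne_zero
    rw [key] at this
    simpa using this
  have hD := h ⟨ip (gb c z) (Q χ z (gb c z)), - ip (ga c z) (Q χ z (gb c z))⟩ (by
    intro h0
    exact hC.ne' (congrArg Complex.re h0))
  rw [key] at hD
  unfold Gdet
  simp only at hD
  set A := ip (ga c z) (Q χ z (ga c z))
  set B := ip (ga c z) (Q χ z (gb c z))
  set C := ip (gb c z) (Q χ z (gb c z))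
  have e : C ^ 2 * A + 2 * C * -B * B + (-B) ^ 2 * C = C * (A * C - B ^ 2) := by ring
  rw [e] at hD
  exact (mul_pos_iff_of_pos_left hC).1 hD

/-- the lift of the real coordinate field -/
def Xre (χ : ℝ) (z a b : Fin n → ℂ) : Fin n → ℂ :=
  (ip b (Q χ z b) / Gdet χ z a b) • Q χ z a - (ip a (Q χ z b) / Gdet χ z a b) • Q χ z b
/-- the lift of the imaginary coordinate field -/
def Xim (χ : ℝ) (z a b : Fin n → ℂ) : Fin n → ℂ :=
  (ip a (Q χ z a) / Gdet χ z a b) • Q χ z b - (ip a (Q χ z b) / Gdet χ z a b) • Q χ z a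

lemma X_ids {χ : ℝ} {z a b : Fin n → ℂ} (h : Gdet χ z a b ≠ 0) :
    ip a (Xre χ z a b) = 1 ∧ ip b (Xre χ z a b) = 0 ∧
    ip a (Xim χ z a b) = 0 ∧ ip b (Xim χ z a b) = 1 := by
  simp only [Xre, Xim, ip_sub, ip_smul, ip_Q_symm χ z a b]
  refine ⟨?_, ?_, ?_, ?_⟩
  · field_simp; unfold Gdet; ring
  · field_simp; ring
  · field_simp; ring
  · field_simp; unfold Gdet; ring

lemma X_tan (z a b : Fin n → ℂ) : ip z (Xre 0 z a b) = 0 ∧ ip z (Xim 0 z a b) = 0 := by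
  have h : ∀ d, ip z (Q 0 z d) = 0 := fun d => by rw [ip_Q]; ring
  simp [Xre, Xim, ip_sub, ip_smul, h]

/-- the lifting field -/
def XX (χ : (Fin n → ℂ) → ℝ) (c : MixedCoeff n) (z : Fin n → ℂ) : ℂ →L[ℝ] (Fin n → ℂ) :=
  Complex.reCLM.smulRight (Xre (χ z) z (ga c z) (gb c z)) +
  Complex.imCLM.smulRight (Xim (χ z) z (ga c z) (gb c z))

lemma XX_apply (χ : (Fin n → ℂ) → ℝ) (c : MixedCoeff n) (z : Fin n → ℂ) (w : ℂ) :
    XX χ c z w = w.re • Xre (χ z) z (ga c z) (gb c z) + w.im • Xim (χ z) z (ga c z) (gb c z) :=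
  rfl

lemma Q_contDiff {χ : (Fin n → ℂ) → ℝ} (hχ : ContDiff ℝ (⊤ : ℕ∞) χ)
    {a : (Fin n → ℂ) → (Fin n → ℂ)} (ha : ContDiff ℝ (⊤ : ℕ∞) a) :
    ContDiff ℝ (⊤ : ℕ∞) fun z => Q (χ z) z (a z) :=
  ((hχ.add (ip_contDiff contDiff_id contDiff_id)).smul ha).sub
    ((ip_contDiff contDiff_id ha).smul contDiff_id)

lemma XX_contDiffOn {χ : (Fin n → ℂ) → ℝ} (hχ : ContDiff ℝ (⊤ : ℕ∞) χ) (c : MixedCoeff n)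
    (s : Set (Fin n → ℂ)) (hs : ∀ z ∈ s, Gdet (χ z) z (ga c z) (gb c z) ≠ 0) :
    ContDiffOn ℝ (⊤ : ℕ∞) (XX χ c) s := by
  have ha := ga_contDiff c
  have hb := gb_contDiff c
  have qa := Q_contDiff hχ ha
  have qb := Q_contDiff hχ hb
  have hA := ip_contDiff ha qa
  have hBc := ip_contDiff ha qb
  have hC := ip_contDiff hb qb
  have hD : ContDiff ℝ (⊤ : ℕ∞) fun z => Gdet (χ z) z (ga c z) (gb c z) :=
    (hA.mul hC).sub (hBc.pow 2)
  have h1 : ContDiffOn ℝ (⊤ : ℕ∞) (fun z => Xre (χ z) z (ga c z) (gb c z)) s :=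
    ((hC.contDiffOn.div hD.contDiffOn hs).smul qa.contDiffOn).sub
      ((hBc.contDiffOn.div hD.contDiffOn hs).smul qb.contDiffOn)
  have h2 : ContDiffOn ℝ (⊤ : ℕ∞) (fun z => Xim (χ z) z (ga c z) (gb c z)) s :=
    ((hA.contDiffOn.div hD.contDiffOn hs).smul qb.contDiffOn).sub
      ((hBc.contDiffOn.div hD.contDiffOn hs).smul qa.contDiffOn)
  exact (contDiffOn_const.smulRight h1).add (contDiffOn_const.smulRight h2)

theorem main (c : MixedCoeff n) (B : Set ℂ)
    (hB : B = Mixed.eval c '' Mixed.Sing c ∪ Mixed.Sset c) (v : ℂ) (hv : v ∉ B) :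
    ∃ U : Set ℂ, IsOpen U ∧ v ∈ U ∧ U ⊆ Bᶜ ∧
      ∃ (Φ : (Fin n → ℂ) → ℂ × (Fin n → ℂ)) (Ψ : ℂ × (Fin n → ℂ) → (Fin n → ℂ)),
        (∀ x ∈ Mixed.eval c ⁻¹' U,
          Φ x ∈ U ×ˢ (Mixed.eval c ⁻¹' {v}) ∧ Ψ (Φ x) = x ∧ (Φ x).1 = Mixed.eval c x) ∧
        (∀ p ∈ U ×ˢ (Mixed.eval c ⁻¹' {v}), Ψ p ∈ Mixed.eval c ⁻¹' U ∧ Φ (Ψ p) = p) ∧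
        ContDiffOn ℝ (⊤ : ℕ∞) Φ (Mixed.eval c ⁻¹' U) ∧
        ContDiffOn ℝ (⊤ : ℕ∞) Ψ (U ×ˢ (Mixed.eval c ⁻¹' {v})) := by
  subst hB
  rw [Set.mem_union, not_or] at hv
  obtain ⟨R, hR, δ₁, hδ₁, far⟩ := far_bound c hv.2
  obtain ⟨δ₂, hδ₂, near⟩ := near_bound c hv.1 R
  obtain ⟨δ, hδ, hd1, hd2⟩ : ∃ δ > 0, δ ≤ δ₁ ∧ δ ≤ δ₂ :=
    ⟨min δ₁ δ₂, lt_min hδ₁ hδ₂, min_le_left _ _, min_le_right _ _⟩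
  replace far : ∀ z, eval c z ∈ Metric.ball v δ → R < ‖z‖ → z ∉ Milnor c := fun z hz =>
    far z (Metric.ball_subset_ball hd1 hz)
  replace near : ∀ z, eval c z ∈ Metric.ball v δ → ‖z‖ ≤ R → ∀ m : ℂ, m ≠ 0 → gm c m z ≠ 0 :=
    fun z hz => near z (Metric.ball_subset_ball hd2 hz)
  let β : ContDiffBump (0 : Fin n → ℂ) := ⟨R + 1, R + 2, by linarith, by linarith⟩
  have hdet : ∀ z, eval c z ∈ Metric.ball v δ → Gdet (β z) z (ga c z) (gb c z) ≠ 0 := by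
    intro z hz
    refine (Gdet_pos c _ z fun m hm => Q_pos β.nonneg _ _ ?_).ne'
    by_cases hzR : ‖z‖ ≤ R
    · left
      refine ⟨?_, near z hz hzR m hm⟩
      apply β.pos_of_mem_ball
      rw [mem_ball_zero_iff]
      show ‖z‖ < R + 2
      linarith
    · right
      push Not at hzR
      refine ⟨norm_pos_iff.1 (hR.trans_lt hzR), fun l hl => far z hz hzR ⟨l, m, hm, fun i => ?_⟩⟩
      rw [← gm_apply, hl]
      simp
  have hsurj : ∀ z, eval c z ∈ Metric.ball v δ → ∀ w, fderiv ℝ (eval c) z (XX β c z w) = w := by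
    intro z hz w
    obtain ⟨i1, i2, i3, i4⟩ := X_ids (hdet z hz)
    apply Complex.ext
    · rw [fderiv_re, XX_apply, ip_add, ip_smul, ip_smul, i1, i3]; ring
    · rw [fderiv_im, XX_apply, ip_add, ip_smul, ip_smul, i2, i4]; ring
  have hρ : ContDiff ℝ (⊤ : ℕ∞) fun z : Fin n → ℂ => ip z z := ip_contDiff contDiff_id contDiff_id
  have hprop : ∀ K : ℝ, ∃ r : ℝ, ∀ z : Fin n → ℂ, ip z z ≤ K → ‖z‖ ≤ r := by
    intro K
    refine ⟨Real.sqrt K, fun z hz => ?_⟩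
    rw [pi_norm_le_iff_of_nonneg (Real.sqrt_nonneg _)]
    exact fun i => Real.le_sqrt_of_sq_le ((normSq_le_ip z i).trans hz)
  obtain ⟨M, hM⟩ := (isCompact_closedBall (0 : Fin n → ℂ) (R + 2)).bddAbove_image
    hρ.continuous.continuousOn
  obtain ⟨Φ, Ψ, h1, h2, h3, h4⟩ := fib_abstract (eval c) (eval_contDiff c)
    (fun z => ip z z) hρ hprop (M + 1) v δ hδ (XX β c)
    (XX_contDiffOn β.contDiff c _ hdet) hsurj (by
      intro z hz hMz w
      have hz2 : R + 2 ≤ ‖z‖ := by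
        by_contra hlt
        push Not at hlt
        have := hM ⟨z, mem_closedBall_zero_iff.2 hlt.le, rfl⟩
        simp only at this hMz
        linarith
      have h0 : β z = 0 := β.zero_of_le_dist (by rw [dist_zero_right]; exact hz2)
      obtain ⟨t1, t2⟩ := X_tan z (ga c z) (gb c z)
      rw [ip_self_fderiv, XX_apply, h0, ip_add, ip_smul, ip_smul, t1, t2]
      ring)
  refine ⟨Metric.ball v (δ / 3), Metric.isOpen_ball, Metric.mem_ball_self (by positivity), ?_,
    Φ, Ψ, h1, h2, h3.contDiffOn, h4.contDiffOn⟩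
  intro w hw hwB
  have hw' : w ∈ Metric.ball v δ := Metric.ball_subset_ball (by linarith) hw
  rcases hwB with ⟨z, hz, rfl⟩ | ⟨zk, hk1, hk2, hk3⟩
  · exact hz fun u => ⟨_, hsurj z hw' u⟩
  · obtain ⟨k, ha, hb⟩ := ((hk2.eventually_gt_atTop R).and
      (hk3.eventually (Metric.isOpen_ball.mem_nhds hw'))).exists
    exact far _ hb ha (hk1 k)

end FibAux

/-- Fibration theorem. -/
theorem mixed_fibration_theorem {n : ℕ} (c : MixedCoeff n) (B : Set ℂ)
    (hB : B = Mixed.eval c '' Mixed.Sing c ∪ Mixed.Sset c) :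
    ∀ v : ℂ, v ∉ B → ∃ U : Set ℂ, IsOpen U ∧ v ∈ U ∧ U ⊆ Bᶜ ∧
      ∃ (Φ : (Fin n → ℂ) → ℂ × (Fin n → ℂ)) (Ψ : ℂ × (Fin n → ℂ) → (Fin n → ℂ)),
        (∀ x ∈ Mixed.eval c ⁻¹' U,
          Φ x ∈ U ×ˢ (Mixed.eval c ⁻¹' {v}) ∧ Ψ (Φ x) = x ∧ (Φ x).1 = Mixed.eval c x) ∧
        (∀ p ∈ U ×ˢ (Mixed.eval c ⁻¹' {v}), Ψ p ∈ Mixed.eval c ⁻¹' U ∧ Φ (Ψ p) = p) ∧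
        ContDiffOn ℝ (⊤ : ℕ∞) Φ (Mixed.eval c ⁻¹' U) ∧
        ContDiffOn ℝ (⊤ : ℕ∞) Ψ (U ×ˢ (Mixed.eval c ⁻¹' {v})) := by
  exact fun v hv => FibAux.main c B hB v hv
end
end
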